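/- arXiv:1712.04549 — 2 statements merged into one kernel-verified Lean document; each statement's English description precedes it below -/
import Mathlib

section
/- Let H be a 2-connected outerplanar near-triangulation with k triangles. Then H is isomorphic to a minor of 𝒬_k. Furthermore, the minor inclusion can be chosen so that for every edge a_1a_2 of H incident with the unbounded face and for each i ∈ {1,2}, the vertex w_i belongs to the node of a_i, where w_1w_2 is the base edge of 𝒬_k. -/
/-!
Common definitions: minors, widths, connectivity, the specific graphs
`K4`, `K23`, `C32`, `graphA`, the binary trees `CT_h`, the graphs `𝒫_k`, `𝒬_k`,
the trees `T_h`, homeomorphic embeddings, cascades, and related notions,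
following Dang--Thomas, "Minors of two-connected graphs of large path-width".
-/

open SimpleGraph

/-- A minor model of `H` in `G`: branch sets `f w` are nonempty, connected,
pairwise disjoint, and edges of `H` are realized by edges of `G` between branch sets. -/
def IsMinorModel {W V : Type*} (H : SimpleGraph W) (G : SimpleGraph V) (f : W → Set V) : Prop :=
  (∀ w, (f w).Nonempty) ∧
  (∀ w, (G.induce (f w)).Connected) ∧
  (∀ w₁ w₂ : W, w₁ ≠ w₂ → Disjoint (f w₁) (f w₂)) ∧
  (∀ w₁ w₂ : W, H.Adj w₁ w₂ → ∃ v₁ ∈ f w₁, ∃ v₂ ∈ f w₂, G.Adj v₁ v₂)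

/-- `H` is (isomorphic to) a minor of `G`. -/
def IsMinor {W V : Type*} (H : SimpleGraph W) (G : SimpleGraph V) : Prop :=
  ∃ f : W → Set V, IsMinorModel H G f

/-- The complete graph on four vertices. -/
def K4 : SimpleGraph (Fin 4) := ⊤

/-- The complete bipartite graph `K_{2,3}`. -/
def K23 : SimpleGraph (Fin 2 ⊕ Fin 3) := completeBipartiteGraph (Fin 2) (Fin 3)

/-- The graph `A`: a cycle `a₁a₂a₃a₄a₅a₆a₁` plus the edges `a₁a₃`, `a₃a₅`, `a₅a₁`. -/
def graphA : SimpleGraph (Fin 6) :=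
  SimpleGraph.fromEdgeSet
    {s(0, 1), s(1, 2), s(2, 3), s(3, 4), s(4, 5), s(5, 0), s(0, 2), s(2, 4), s(4, 0)}

/-- The graph `C_{3,2}`: two disjoint triangles. -/
def C32 : SimpleGraph (Fin 2 × Fin 3) :=
  SimpleGraph.fromRel (fun u v => u.1 = v.1)

/-- A graph is outerplanar iff it has no `K₄` minor and no `K_{2,3}` minor
(the classical characterization of outerplanarity). -/
def Outerplanar {V : Type*} (G : SimpleGraph V) : Prop :=
  ¬ IsMinor K4 G ∧ ¬ IsMinor K23 G

/-- `G` is `k`-connected: it has more than `k` vertices and deleting fewer than `k`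
vertices leaves a connected graph. -/
def IsKConnected {V : Type*} [Fintype V] (k : ℕ) (G : SimpleGraph V) : Prop :=
  k + 1 ≤ Fintype.card V ∧
  ∀ S : Finset V, S.card < k → (G.induce ((↑S : Set V)ᶜ)).Connected

/-- `(Tr, X)` is a tree-decomposition of `G`: `Tr` is a tree, the bags `X t` cover all
vertices and edges (W1), and whenever `t₂` lies on the path of `Tr` between `t₁` and `t₃`
we have `X t₁ ∩ X t₃ ⊆ X t₂` (W2). -/
def IsTreeDecomp {V T : Type*} (G : SimpleGraph V) (Tr : SimpleGraph T) (X : T → Finset V) :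
    Prop :=
  Tr.IsTree ∧
  (∀ v : V, ∃ t, v ∈ X t) ∧
  (∀ u v : V, G.Adj u v → ∃ t, u ∈ X t ∧ v ∈ X t) ∧
  (∀ (t₁ t₂ t₃ : T) (p : Tr.Walk t₁ t₃), p.IsPath → t₂ ∈ p.support →
    ∀ v : V, v ∈ X t₁ → v ∈ X t₃ → v ∈ X t₂)

/-- A path-decomposition of `G`, with bags indexed by `Fin n`. -/
def IsPathDecomp {V : Type*} (G : SimpleGraph V) {n : ℕ} (X : Fin n → Finset V) : Prop :=
  (∀ v : V, ∃ i, v ∈ X i) ∧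
  (∀ u v : V, G.Adj u v → ∃ i, u ∈ X i ∧ v ∈ X i) ∧
  (∀ i j k : Fin n, i ≤ j → j ≤ k → ∀ v : V, v ∈ X i → v ∈ X k → v ∈ X j)

/-- The path-width of a finite graph: the least `w` such that `G` has a
path-decomposition all of whose bags have at most `w + 1` vertices. -/
noncomputable def pathwidth {V : Type*} [Fintype V] (G : SimpleGraph V) : ℕ :=
  sInf {w | ∃ (n : ℕ) (X : Fin n → Finset V), IsPathDecomp G X ∧ ∀ i, (X i).card ≤ w + 1}

/-- The tree-width of a finite graph: the least `w` such that `G` has a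
tree-decomposition all of whose bags have at most `w + 1` vertices. -/
noncomputable def treewidth {V : Type*} [Fintype V] (G : SimpleGraph V) : ℕ :=
  sInf {w | ∃ (T : Type) (_ : Fintype T) (Tr : SimpleGraph T) (X : T → Finset V),
    IsTreeDecomp G Tr X ∧ ∀ t, (X t).card ≤ w + 1}

/-- Vertices of the binary tree `CT_h`: paths from the root, recorded as reversed
lists of left/right moves, of length at most `h`. -/
abbrev CTVert (h : ℕ) := {l : List Bool // l.length ≤ h}

/-- The binary tree `CT_h` of height `h`. -/
def CTgraph (h : ℕ) : SimpleGraph (CTVert h) :=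
  SimpleGraph.fromEdgeSet
    {e | ∃ (b : Bool) (σ : List Bool) (hσ : σ.length < h),
      e = s((⟨σ, le_of_lt hσ⟩ : CTVert h), (⟨b :: σ, by simpa using hσ⟩ : CTVert h))}

/-- The graph `𝒫_k`: the binary tree `CT_k` together with one extra vertex (`none`)
adjacent to every leaf of `CT_k`. -/
def Pgraph (k : ℕ) : SimpleGraph (Option (CTVert k)) :=
  SimpleGraph.fromEdgeSet
    ({e | ∃ (b : Bool) (σ : List Bool) (hσ : σ.length < k),
        e = s(some (⟨σ, le_of_lt hσ⟩ : CTVert k), some (⟨b :: σ, by simpa using hσ⟩ : CTVert k))} ∪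
     {e | ∃ l : CTVert k, l.1.length = k ∧ e = s(none, some l)})

/-- Vertices of `𝒬_k`: the two base vertices of the root triangle (`Sum.inl false` and
`Sum.inl true`), together with one apex vertex for each node of the complete binary tree
of depth `< k` (recorded as a reversed list of moves). -/
abbrev QVert (k : ℕ) := Bool ⊕ {l : List Bool // l.length < k}

/-- The two ends of the base edge of the copy of the triangle at node `σ` of `𝒬_k`. -/
def qbase (k : ℕ) : List Bool → QVert k × QVert k
  | [] => (Sum.inl false, Sum.inl true)
  | b :: σ =>
      ((if b then (qbase k σ).2 else (qbase k σ).1),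
        if h : σ.length < k then Sum.inr ⟨σ, h⟩ else Sum.inl false)

/-- The graph `𝒬_k`, built from triangles as in the recursive definition: the triangle at
node `σ` consists of the base edge `qbase k σ` together with the apex vertex `Sum.inr σ`;
the base edge of `𝒬_k` is `s(Sum.inl false, Sum.inl true)`. -/
def Qgraph (k : ℕ) : SimpleGraph (QVert k) :=
  SimpleGraph.fromEdgeSet
    ({s(Sum.inl false, Sum.inl true)} ∪
     {e | ∃ (σ : List Bool) (h : σ.length < k),
        e = s(Sum.inr ⟨σ, h⟩, (qbase k σ).1) ∨ e = s(Sum.inr ⟨σ, h⟩, (qbase k σ).2)})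

/-- The minor vertices of the tree `T_h` (one for each string of length `≤ h`). -/
abbrev MVert (h : ℕ) := {l : List Bool // l.length ≤ h}

/-- The major vertices of the tree `T_h` (one for each string of length `≤ h - 1`). -/
abbrev JVert (h : ℕ) := {l : List Bool // l.length + 1 ≤ h}

/-- Vertices of the tree `T_h` (obtained from `CT_h` by subdividing every edge not incident
with a degree-one vertex and adding the minor root). -/
abbrev TVert (h : ℕ) := MVert h ⊕ JVert h

/-- The tree `T_h`: each major vertex `σ` is adjacent to the minor vertices `σ` (its parent),
`false :: σ` (its left neighbor) and `true :: σ` (its right neighbor). -/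
def Tgraph (h : ℕ) : SimpleGraph (TVert h) :=
  SimpleGraph.fromEdgeSet
    {e | ∃ (σ : List Bool) (hσ : σ.length + 1 ≤ h),
      e = s(Sum.inr ⟨σ, hσ⟩, Sum.inl ⟨σ, Nat.le_of_succ_le hσ⟩) ∨
      ∃ b : Bool, e = s(Sum.inr ⟨σ, hσ⟩, Sum.inl ⟨b :: σ, by simpa using hσ⟩)}

/-- A homeomorphic embedding of `TA` into `TB`: an injection such that for any two edges of
`TA` sharing an end `t`, the corresponding paths of `TB` are edge-disjoint. -/
def IsHomeoEmb {A B : Type*} (TA : SimpleGraph A) (TB : SimpleGraph B) (η : A → B) : Prop :=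
  Function.Injective η ∧
  ∀ ⦃t t₁ t₂ : A⦄, TA.Adj t t₁ → TA.Adj t t₂ → t₁ ≠ t₂ →
    ∀ (p₁ : TB.Walk (η t) (η t₁)) (p₂ : TB.Walk (η t) (η t₂)),
      p₁.IsPath → p₂.IsPath → ∀ e ∈ p₁.edges, e ∉ p₂.edges

/-- `v` lies in the span of `η`: it lies on a path of `TB` between two vertices in the
image of `η`. -/
def inSpan {A B : Type*} (TB : SimpleGraph B) (η : A → B) (v : B) : Prop :=
  ∃ (a₁ a₂ : A) (p : TB.Walk (η a₁) (η a₂)), p.IsPath ∧ v ∈ p.support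

/-- A cascade of height `h` and size `s` in the tree-decomposition `(Tr, X)`:
a homeomorphic embedding of `T_h` with `|X (η t)| = s` for every minor vertex `t`
and `|X t| ≥ s` for every `t` in the span. -/
def IsCascade {V T : Type*} (Tr : SimpleGraph T) (X : T → Finset V) (h s : ℕ)
    (η : TVert h → T) : Prop :=
  IsHomeoEmb (Tgraph h) Tr η ∧
  (∀ l : MVert h, (X (η (Sum.inl l))).card = s) ∧
  (∀ t : T, inSpan Tr η t → s ≤ (X t).card)

/-- An injective cascade with common intersection set `I`. -/
def IsInjectiveCascade {V T : Type*} (Tr : SimpleGraph T) (X : T → Finset V) (h s : ℕ)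
    (η : TVert h → T) (I : Finset V) : Prop :=
  IsCascade Tr X h s η ∧ I.card < s ∧
  ∀ t t' : TVert h, t ≠ t' → ((X (η t) : Set V) ∩ (X (η t') : Set V)) = (I : Set V)

/-- A family of `s` disjoint paths in `G \ I` (a linkage). -/
def IsLinkage {V : Type*} (G : SimpleGraph V) (I : Finset V) {s : ℕ} {x y : Fin s → V}
    (P : ∀ i : Fin s, G.Walk (x i) (y i)) : Prop :=
  (∀ i, (P i).IsPath) ∧
  (∀ i, ∀ v ∈ (P i).support, v ∉ I) ∧
  (∀ i j, i ≠ j → ∀ v ∈ (P i).support, v ∉ (P j).support)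

/-- An ordered cascade: an injective cascade of size `s + |I|` with common intersection set
`I`, together with orderings `ξ t : Fin s → X (η t) \ I` of the bags at minor vertices, such
that at every major vertex there are left and right linkages connecting corresponding
vertices. -/
def IsOrderedCascade {V T : Type*} (G : SimpleGraph V) (Tr : SimpleGraph T)
    (X : T → Finset V) (h s : ℕ) (η : TVert h → T) (I : Finset V)
    (ξ : MVert h → Fin s → V) : Prop :=
  IsInjectiveCascade Tr X h (s + I.card) η I ∧
  (∀ t : MVert h, Function.Injective (ξ t) ∧
    Set.range (ξ t) = (X (η (Sum.inl t)) : Set V) \ (I : Set V)) ∧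
  ∀ (σ : List Bool) (hσ : σ.length + 1 ≤ h),
    (∃ P : ∀ i : Fin s,
        G.Walk (ξ ⟨σ, Nat.le_of_succ_le hσ⟩ i) (ξ ⟨false :: σ, by simpa using hσ⟩ i),
      IsLinkage G I P) ∧
    (∃ Q : ∀ i : Fin s,
        G.Walk (ξ ⟨σ, Nat.le_of_succ_le hσ⟩ i) (ξ ⟨true :: σ, by simpa using hσ⟩ i),
      IsLinkage G I Q)

/-- The vertex set of the `η`-torso at the major vertex `σ` of `T_h`: the union of the bags
`X t - I` over all `t` such that the path in `Tr` from `t` to `η σ` contains none of the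
images of the three minor neighbors of `σ` as an internal vertex. -/
def torsoSet {V T : Type*} (Tr : SimpleGraph T) (X : T → Finset V) {h : ℕ}
    (η : TVert h → T) (I : Finset V) (σ : List Bool) (hσ : σ.length + 1 ≤ h) : Set V :=
  {v | v ∉ I ∧ ∃ t : T,
    (∀ p : Tr.Walk t (η (Sum.inr ⟨σ, hσ⟩)), p.IsPath →
      ∀ u : T,
        (u = η (Sum.inl ⟨σ, Nat.le_of_succ_le hσ⟩) ∨
         u = η (Sum.inl ⟨false :: σ, by simpa using hσ⟩) ∨
         u = η (Sum.inl ⟨true :: σ, by simpa using hσ⟩)) →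
        u ∈ p.support → u = t ∨ u = η (Sum.inr ⟨σ, hσ⟩)) ∧
    v ∈ X t}

/-- `H` is a tripod in `G` with all vertices in `S`, center `c` and feet `f₁, f₂, f₃`:
the union of three paths from `c` to the feet, pairwise disjoint except for `c`,
at least two of which have length at least one. -/
def IsTripodOn {V : Type*} (G : SimpleGraph V) (S : Set V) (H : G.Subgraph)
    (c f₁ f₂ f₃ : V) : Prop :=
  ∃ (W₁ : G.Walk c f₁) (W₂ : G.Walk c f₂) (W₃ : G.Walk c f₃),
    W₁.IsPath ∧ W₂.IsPath ∧ W₃.IsPath ∧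
    (∀ v ∈ W₁.support, v ∈ S) ∧ (∀ v ∈ W₂.support, v ∈ S) ∧ (∀ v ∈ W₃.support, v ∈ S) ∧
    (∀ v, v ∈ W₁.support → v ∈ W₂.support → v = c) ∧
    (∀ v, v ∈ W₁.support → v ∈ W₃.support → v = c) ∧
    (∀ v, v ∈ W₂.support → v ∈ W₃.support → v = c) ∧
    ((1 ≤ W₁.length ∧ 1 ≤ W₂.length) ∨ (1 ≤ W₁.length ∧ 1 ≤ W₃.length) ∨
      (1 ≤ W₂.length ∧ 1 ≤ W₃.length)) ∧
    H = W₁.toSubgraph ⊔ W₂.toSubgraph ⊔ W₃.toSubgraph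

/-- The major vertex `σ` has property `A_{ij}` in the ordered cascade `η` with orderings
`ξ`: there are two disjoint tripods in the `η`-torso at `σ`, with feet as prescribed. -/
def HasPropA {V T : Type*} (G : SimpleGraph V) (Tr : SimpleGraph T) (X : T → Finset V)
    {h s : ℕ} (η : TVert h → T) (I : Finset V) (ξ : MVert h → Fin s → V)
    (σ : List Bool) (hσ : σ.length + 1 ≤ h) (i j : Fin s) : Prop :=
  ∃ (Li Lj : G.Subgraph) (ci cj : V),
    (∃ m₂ m₃ : Fin s, (m₂ = i ∨ m₂ = j) ∧ (m₃ = i ∨ m₃ = j) ∧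
      IsTripodOn G (torsoSet Tr X η I σ hσ) Li ci
        (ξ ⟨σ, Nat.le_of_succ_le hσ⟩ i)
        (ξ ⟨false :: σ, by simpa using hσ⟩ m₂)
        (ξ ⟨true :: σ, by simpa using hσ⟩ m₃)) ∧
    (∃ m₂ m₃ : Fin s, (m₂ = i ∨ m₂ = j) ∧ (m₃ = i ∨ m₃ = j) ∧
      IsTripodOn G (torsoSet Tr X η I σ hσ) Lj cj
        (ξ ⟨σ, Nat.le_of_succ_le hσ⟩ j)
        (ξ ⟨false :: σ, by simpa using hσ⟩ m₂)
        (ξ ⟨true :: σ, by simpa using hσ⟩ m₃)) ∧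
    Disjoint Li.verts Lj.verts

/-- The major vertex `σ` has property `B_{ij}`: there are two tripods `L_i`, `L_j` in the
`η`-torso at `σ`, with feet `v_{m,1}, v_{m,2}, v_{m,3}` where `{v_{i,y}, v_{j,y}}` equals
`{ξ_{t_y} i, ξ_{t_y} j}` for each `y`, which intersect exactly in a path that is the
intersection of the branch of `L_i` to `v_{i,3}` and the branch of `L_j` to `v_{j,2}`,
and which avoids both centers. -/
def HasPropB {V T : Type*} (G : SimpleGraph V) (Tr : SimpleGraph T) (X : T → Finset V)
    {h s : ℕ} (η : TVert h → T) (I : Finset V) (ξ : MVert h → Fin s → V)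
    (σ : List Bool) (hσ : σ.length + 1 ≤ h) (i j : Fin s) : Prop :=
  ∃ (vi vj : Fin 3 → V) (ci cj : V)
    (Wi : ∀ y : Fin 3, G.Walk ci (vi y)) (Wj : ∀ y : Fin 3, G.Walk cj (vj y)),
    (∀ y : Fin 3, ({vi y, vj y} : Set V) =
      {(![ξ ⟨σ, Nat.le_of_succ_le hσ⟩,
          ξ ⟨false :: σ, by simpa using hσ⟩,
          ξ ⟨true :: σ, by simpa using hσ⟩] : Fin 3 → Fin s → V) y i,
       (![ξ ⟨σ, Nat.le_of_succ_le hσ⟩,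
          ξ ⟨false :: σ, by simpa using hσ⟩,
          ξ ⟨true :: σ, by simpa using hσ⟩] : Fin 3 → Fin s → V) y j}) ∧
    (∀ y, (Wi y).IsPath) ∧ (∀ y, (Wj y).IsPath) ∧
    (∀ y, ∀ v ∈ (Wi y).support, v ∈ torsoSet Tr X η I σ hσ) ∧
    (∀ y, ∀ v ∈ (Wj y).support, v ∈ torsoSet Tr X η I σ hσ) ∧
    (∀ y y' : Fin 3, y ≠ y' → ∀ v, v ∈ (Wi y).support → v ∈ (Wi y').support → v = ci) ∧
    (∀ y y' : Fin 3, y ≠ y' → ∀ v, v ∈ (Wj y).support → v ∈ (Wj y').support → v = cj) ∧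
    ((1 ≤ (Wi 0).length ∧ 1 ≤ (Wi 1).length) ∨ (1 ≤ (Wi 0).length ∧ 1 ≤ (Wi 2).length) ∨
      (1 ≤ (Wi 1).length ∧ 1 ≤ (Wi 2).length)) ∧
    ((1 ≤ (Wj 0).length ∧ 1 ≤ (Wj 1).length) ∨ (1 ≤ (Wj 0).length ∧ 1 ≤ (Wj 2).length) ∨
      (1 ≤ (Wj 1).length ∧ 1 ≤ (Wj 2).length)) ∧
    (((Wi 0).toSubgraph ⊔ (Wi 1).toSubgraph ⊔ (Wi 2).toSubgraph) ⊓
      ((Wj 0).toSubgraph ⊔ (Wj 1).toSubgraph ⊔ (Wj 2).toSubgraph)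
        = (Wi 2).toSubgraph ⊓ (Wj 1).toSubgraph) ∧
    ∃ (x y : V) (p : G.Walk x y), p.IsPath ∧
      (Wi 2).toSubgraph ⊓ (Wj 1).toSubgraph = p.toSubgraph ∧
      ci ∉ p.support ∧ cj ∉ p.support

/-- The major vertex `σ` has property `AB_{ij}`: in the `η`-torso at `σ` there are disjoint
paths `L_i, L_j` from `ξ_{t₁}(m)` to `ξ_{t₂}(m)` and disjoint paths `R_i, R_j` from
`ξ_{t₁}(m)` to `ξ_{t₃}(m)`, for `m ∈ {i, j}`. -/
def HasPropAB {V T : Type*} (G : SimpleGraph V) (Tr : SimpleGraph T) (X : T → Finset V)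
    {h s : ℕ} (η : TVert h → T) (I : Finset V) (ξ : MVert h → Fin s → V)
    (σ : List Bool) (hσ : σ.length + 1 ≤ h) (i j : Fin s) : Prop :=
  ∃ (Li : G.Walk (ξ ⟨σ, Nat.le_of_succ_le hσ⟩ i) (ξ ⟨false :: σ, by simpa using hσ⟩ i))
    (Lj : G.Walk (ξ ⟨σ, Nat.le_of_succ_le hσ⟩ j) (ξ ⟨false :: σ, by simpa using hσ⟩ j))
    (Ri : G.Walk (ξ ⟨σ, Nat.le_of_succ_le hσ⟩ i) (ξ ⟨true :: σ, by simpa using hσ⟩ i))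
    (Rj : G.Walk (ξ ⟨σ, Nat.le_of_succ_le hσ⟩ j) (ξ ⟨true :: σ, by simpa using hσ⟩ j)),
    Li.IsPath ∧ Lj.IsPath ∧ Ri.IsPath ∧ Rj.IsPath ∧
    (∀ v ∈ Li.support, v ∈ torsoSet Tr X η I σ hσ) ∧
    (∀ v ∈ Lj.support, v ∈ torsoSet Tr X η I σ hσ) ∧
    (∀ v ∈ Ri.support, v ∈ torsoSet Tr X η I σ hσ) ∧
    (∀ v ∈ Rj.support, v ∈ torsoSet Tr X η I σ hσ) ∧
    (∀ v ∈ Li.support, v ∉ Lj.support) ∧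
    (∀ v ∈ Ri.support, v ∉ Rj.support)

/-- A monotone homeomorphic embedding `T_a ↪ T_h`: the minor root maps to the minor root,
and for every major vertex with trinity `(t₁, t₂, t₃)`, the images of `t₂` and `t₃` are the
left and right neighbors of the (major) image of the vertex. -/
def IsMonotoneEmb (a h : ℕ) (γ : TVert a → TVert h) : Prop :=
  IsHomeoEmb (Tgraph a) (Tgraph h) γ ∧
  γ (Sum.inl ⟨[], Nat.zero_le a⟩) = Sum.inl ⟨[], Nat.zero_le h⟩ ∧
  ∀ (σ : List Bool) (hσ : σ.length + 1 ≤ a),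
    ∃ (τ : List Bool) (hτ : τ.length + 1 ≤ h),
      γ (Sum.inr ⟨σ, hσ⟩) = Sum.inr ⟨τ, hτ⟩ ∧
      γ (Sum.inl ⟨false :: σ, by simpa using hσ⟩) = Sum.inl ⟨false :: τ, by simpa using hτ⟩ ∧
      γ (Sum.inl ⟨true :: σ, by simpa using hσ⟩) = Sum.inl ⟨true :: τ, by simpa using hτ⟩

namespace NT

def Conn {V : Type*} (G : SimpleGraph V) (K : Set V) : Prop :=
  K.Nonempty ∧ ∀ U : Set V, (∃ x ∈ K, x ∈ U) → (∃ y ∈ K, y ∉ U) →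
    ∃ x ∈ K, ∃ y ∈ K, x ∈ U ∧ y ∉ U ∧ G.Adj x y

def Edge {V : Type*} (G : SimpleGraph V) (X Y : Set V) : Prop :=
  ∃ x ∈ X, ∃ y ∈ Y, G.Adj x y

theorem Edge.symm {V : Type*} {G : SimpleGraph V} {X Y : Set V} (h : Edge G X Y) : Edge G Y X := by
  obtain ⟨x, hx, y, hy, h⟩ := h
  exact ⟨y, hy, x, hx, h.symm⟩

theorem Edge.mono {V : Type*} {G : SimpleGraph V} {X Y X' Y' : Set V} (h : Edge G X Y)
    (h1 : X ⊆ X') (h2 : Y ⊆ Y') : Edge G X' Y' := by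
  obtain ⟨x, hx, y, hy, h⟩ := h
  exact ⟨x, h1 hx, y, h2 hy, h⟩

theorem conn_of_induce {V : Type*} {G : SimpleGraph V} {K : Set V}
    (h : (G.induce K).Connected) : Conn G K := by
  obtain ⟨⟨v, hv⟩⟩ := h.nonempty
  refine ⟨⟨v, hv⟩, ?_⟩
  rintro U ⟨x, hx, hxU⟩ ⟨y, hy, hyU⟩
  obtain ⟨p⟩ := h.preconnected ⟨x, hx⟩ ⟨y, hy⟩
  have key : ∀ (u w : K) (p : (G.induce K).Walk u w), u.1 ∈ U → w.1 ∉ U →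
      ∃ x ∈ K, ∃ y ∈ K, x ∈ U ∧ y ∉ U ∧ G.Adj x y := by
    intro u w p
    induction p with
    | nil => intro h1 h2; exact absurd h1 h2
    | @cons a b c hab p ih =>
      intro h1 h2
      by_cases hb : b.1 ∈ U
      · exact ih hb h2
      · exact ⟨a.1, a.2, b.1, b.2, h1, hb, by simpa using hab⟩
  exact key _ _ p hxU hyU

theorem Conn.induce {V : Type*} {G : SimpleGraph V} {K : Set V}
    (h : Conn G K) : (G.induce K).Connected := by
  obtain ⟨⟨v, hv⟩, h⟩ := h
  have : Nonempty K := ⟨⟨v, hv⟩⟩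
  have hr : ∀ w : K, (G.induce K).Reachable ⟨v, hv⟩ w := by
    by_contra! hc
    obtain ⟨w, hw⟩ := hc
    obtain ⟨x, hx, y, hy, ⟨_, hxU⟩, hyU, hadj⟩ :=
      h {z | ∃ hz : z ∈ K, (G.induce K).Reachable ⟨v, hv⟩ ⟨z, hz⟩}
      ⟨v, hv, hv, SimpleGraph.Reachable.refl _⟩ ⟨w.1, w.2, fun ⟨_, h⟩ => hw h⟩
    apply hyU
    refine ⟨hy, hxU.trans (SimpleGraph.Adj.reachable ?_)⟩
    simpa using hadj
  exact ⟨fun x y => (hr x).symm.trans (hr y)⟩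

theorem conn_singleton {V : Type*} (G : SimpleGraph V) (v : V) : Conn G {v} := by
  refine ⟨⟨v, rfl⟩, ?_⟩
  rintro U ⟨x, hx, hxU⟩ ⟨y, hy, hyU⟩
  rw [Set.mem_singleton_iff] at hx hy
  subst hx; subst hy
  exact absurd hxU hyU

theorem Conn.union_inter {V : Type*} {G : SimpleGraph V} {X Y : Set V} (hX : Conn G X)
    (hY : Conn G Y) (h : ∃ z, z ∈ X ∧ z ∈ Y) : Conn G (X ∪ Y) := by
  obtain ⟨z, hzX, hzY⟩ := h
  refine ⟨⟨z, Or.inl hzX⟩, ?_⟩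
  have hXc := hX.2
  have hYc := hY.2
  intro U hx hy
  by_cases hXU : (∃ x ∈ X, x ∈ U) ∧ (∃ y ∈ X, y ∉ U)
  · obtain ⟨x, hx, y, hy, h⟩ := hXc U hXU.1 hXU.2
    exact ⟨x, Or.inl hx, y, Or.inl hy, h⟩
  by_cases hYU : (∃ x ∈ Y, x ∈ U) ∧ (∃ y ∈ Y, y ∉ U)
  · obtain ⟨x, hx, y, hy, h⟩ := hYc U hYU.1 hYU.2
    exact ⟨x, Or.inr hx, y, Or.inr hy, h⟩
  exfalso
  obtain ⟨x, hx, hxU⟩ := hx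
  obtain ⟨y, hy, hyU⟩ := hy
  by_cases hz : z ∈ U
  · rcases hy with hy | hy
    · exact hXU ⟨⟨z, hzX, hz⟩, ⟨y, hy, hyU⟩⟩
    · exact hYU ⟨⟨z, hzY, hz⟩, ⟨y, hy, hyU⟩⟩
  · rcases hx with hx | hx
    · exact hXU ⟨⟨x, hx, hxU⟩, ⟨z, hzX, hz⟩⟩
    · exact hYU ⟨⟨x, hx, hxU⟩, ⟨z, hzY, hz⟩⟩

theorem conn_pair {V : Type*} {G : SimpleGraph V} {x y : V} (h : G.Adj x y) :
    Conn G {x, y} := by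
  refine ⟨⟨x, by simp⟩, ?_⟩
  rintro U ⟨u, hu, huU⟩ ⟨v, hv, hvU⟩
  have := h.symm
  refine ⟨u, hu, v, hv, huU, hvU, ?_⟩
  simp only [Set.mem_insert_iff, Set.mem_singleton_iff] at hu hv
  rcases hu with rfl | rfl <;> rcases hv with rfl | rfl <;> first | assumption | exact absurd huU hvU

theorem Conn.union {V : Type*} {G : SimpleGraph V} {X Y : Set V} (hX : Conn G X)
    (hY : Conn G Y) (h : Edge G X Y) : Conn G (X ∪ Y) := by
  obtain ⟨x, hx, y, hy, h⟩ := h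
  have h1 := (hX.union_inter (conn_pair h) ⟨x, hx, by simp⟩).union_inter hY ⟨y, by simp, hy⟩
  convert h1 using 1
  ext z
  simp only [Set.mem_union, Set.mem_insert_iff, Set.mem_singleton_iff]
  constructor
  · tauto
  · rintro ((h | rfl | rfl) | h) <;> tauto

theorem Conn.insert {V : Type*} {G : SimpleGraph V} {X : Set V} (hX : Conn G X) {x y : V}
    (hx : x ∈ X) (h : G.Adj x y) : Conn G (insert y X) := by
  rw [Set.insert_eq, Set.union_comm]
  exact hX.union (conn_singleton G y) ⟨x, hx, y, rfl, h⟩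

/-- component -/
theorem exists_comp {V : Type*} [Finite V] (G : SimpleGraph V) (K : Set V) (v : V) (hv : v ∈ K) :
    ∃ R ⊆ K, v ∈ R ∧ Conn G R ∧ ∀ x ∈ R, ∀ y ∈ K, G.Adj x y → y ∈ R := by
  obtain ⟨R, hR⟩ := Set.Finite.exists_maximal (s := {R : Set V | R ⊆ K ∧ v ∈ R ∧ Conn G R})
    (Set.toFinite _) ⟨{v}, by simpa using hv, rfl, conn_singleton G v⟩
  obtain ⟨h1, h2, h3⟩ := hR.prop
  refine ⟨R, h1, h2, h3, fun x hx y hy hxy => ?_⟩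
  have : insert y R ≤ R := hR.le_of_ge (y := insert y R)
    ⟨Set.insert_subset hy h1, Or.inr h2, h3.insert hx hxy⟩ (Set.subset_insert _ _)
  exact this (Or.inl rfl)

theorem k4_of {V : Type*} {G : SimpleGraph V} {A B C D : Set V} (hA : Conn G A) (hB : Conn G B)
    (hC : Conn G C) (hD : Conn G D) (dAB : Disjoint A B) (dAC : Disjoint A C) (dAD : Disjoint A D)
    (dBC : Disjoint B C) (dBD : Disjoint B D) (dCD : Disjoint C D)
    (eAB : Edge G A B) (eAC : Edge G A C) (eAD : Edge G A D)
    (eBC : Edge G B C) (eBD : Edge G B D) (eCD : Edge G C D) : IsMinor K4 G := by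
  refine ⟨![A, B, C, D], ?_, ?_, ?_, ?_⟩
  · intro w; fin_cases w
    exacts [hA.1, hB.1, hC.1, hD.1]
  · intro w; fin_cases w
    exacts [hA.induce, hB.induce, hC.induce, hD.induce]
  · intro w w' h
    fin_cases w <;> fin_cases w' <;> first | exact absurd rfl h | assumption | (apply Disjoint.symm; assumption)
  · intro w w' h
    have h := h.ne
    change Edge G _ _
    fin_cases w <;> fin_cases w' <;> first | exact absurd rfl h | assumption | (apply Edge.symm; assumption)

theorem k23_of {V : Type*} {G : SimpleGraph V} {A B C D E : Set V} (hA : Conn G A) (hB : Conn G B)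
    (hC : Conn G C) (hD : Conn G D) (hE : Conn G E)
    (dAB : Disjoint A B) (dAC : Disjoint A C) (dAD : Disjoint A D) (dAE : Disjoint A E)
    (dBC : Disjoint B C) (dBD : Disjoint B D) (dBE : Disjoint B E) (dCD : Disjoint C D)
    (dCE : Disjoint C E) (dDE : Disjoint D E)
    (eAC : Edge G A C) (eAD : Edge G A D) (eAE : Edge G A E)
    (eBC : Edge G B C) (eBD : Edge G B D) (eBE : Edge G B E) : IsMinor K23 G := by
  refine ⟨Sum.elim ![A, B] ![C, D, E], ?_, ?_, ?_, ?_⟩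
  · rintro (w | w) <;> fin_cases w
    exacts [hA.1, hB.1, hC.1, hD.1, hE.1]
  · rintro (w | w) <;> fin_cases w
    exacts [hA.induce, hB.induce, hC.induce, hD.induce, hE.induce]
  · rintro (w | w) (w' | w') h <;>
    fin_cases w <;> fin_cases w' <;> first | exact absurd rfl h | assumption | (apply Disjoint.symm; assumption)
  · rintro (w | w) (w' | w') h <;> simp [K23] at h <;>
    change Edge G _ _ <;>
    fin_cases w <;> fin_cases w' <;> first | assumption | (apply Edge.symm; assumption)

/-- Noncrossing order. -/
def NC {V : Type*} (G : SimpleGraph V) (φ : V → ℕ) : Prop :=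
  ∀ u v x y, G.Adj u v → G.Adj x y → φ u < φ x → φ x < φ v → φ v < φ y → False

theorem nc_conn {V : Type*} {G : SimpleGraph V} {φ : V → ℕ} (hi : Function.Injective φ)
    (h : NC G φ) {X Y : Set V} (hX : Conn G X) (hY : Conn G Y) (hd : Disjoint X Y)
    {p q r s : V} (hp : p ∈ X) (hr : r ∈ X) (hq : q ∈ Y) (hs : s ∈ Y)
    (h1 : φ p < φ q) (h2 : φ q < φ r) (h3 : φ r < φ s) : False := by
  have hne : ∀ x ∈ X, ∀ y ∈ Y, φ x ≠ φ y := fun x hx y hy e =>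
    Set.disjoint_left.1 hd hx (hi e ▸ hy)
  obtain ⟨x, hx, x', hx', hxU, hxU', hxx⟩ := hX.2 {v | φ q < φ v ∧ φ v < φ s}
    ⟨r, hr, h2, h3⟩ ⟨p, hp, fun h => by have := h.1; omega⟩
  simp only [Set.mem_ofPred_eq] at hxU hxU'
  have n1 := hne x' hx' q hq
  have n2 := hne x' hx' s hs
  by_cases hlt : φ x' < φ q
  · obtain ⟨y, hy, y', hy', hyU, hyU', hyy⟩ := hY.2 {v | φ x' < φ v ∧ φ v < φ x}
      ⟨q, hq, hlt, hxU.1⟩ ⟨s, hs, fun h => by have := h.2; omega⟩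
    simp only [Set.mem_ofPred_eq] at hyU hyU'
    have n3 := hne x' hx' y' hy'
    have n4 := hne x hx y' hy'
    by_cases h5 : φ y' < φ x'
    · exact h y' y x' x hyy.symm hxx.symm h5 hyU.1 hyU.2
    · exact h x' x y y' hxx.symm hyy hyU.1 hyU.2 (by omega)
  · obtain ⟨y, hy, y', hy', hyU, hyU', hyy⟩ := hY.2 {v | φ x < φ v ∧ φ v < φ x'}
      ⟨s, hs, hxU.2, by omega⟩ ⟨q, hq, fun h => by have := h.1; omega⟩
    simp only [Set.mem_ofPred_eq] at hyU hyU'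
    have n3 := hne x' hx' y' hy'
    have n4 := hne x hx y' hy'
    by_cases h5 : φ y' < φ x
    · exact h y' y x x' hyy.symm hxx h5 hyU.1 hyU.2
    · exact h x x' y y' hxx hyy hyU.1 hyU.2 (by omega)

theorem nc_conn' {V : Type*} {G : SimpleGraph V} {φ : V → ℕ} (hi : Function.Injective φ)
    (h : NC G φ) {X Y : Set V} (hX : Conn G X) (hY : Conn G Y) (hd : Disjoint X Y)
    {p q r s : V} (hp : p ∈ X) (hr : r ∈ X) (hq : q ∈ Y) (hs : s ∈ Y) :
    ((φ p < φ q ∧ φ q < φ r) ∨ (φ r < φ q ∧ φ q < φ p)) ↔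
    ((φ p < φ s ∧ φ s < φ r) ∨ (φ r < φ s ∧ φ s < φ p)) := by
  have hne : ∀ x ∈ X, ∀ y ∈ Y, φ x ≠ φ y := fun x hx y hy e =>
    Set.disjoint_left.1 hd hx (hi e ▸ hy)
  have a1 := hne p hp q hq
  have a2 := hne p hp s hs
  have a3 := hne r hr q hq
  have a4 := hne r hr s hs
  have b1 : ¬ (φ p < φ q ∧ φ q < φ r ∧ φ r < φ s) := fun x => nc_conn hi h hX hY hd hp hr hq hs x.1 x.2.1 x.2.2
  have b2 : ¬ (φ p < φ s ∧ φ s < φ r ∧ φ r < φ q) := fun x => nc_conn hi h hX hY hd hp hr hs hq x.1 x.2.1 x.2.2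
  have b3 : ¬ (φ r < φ q ∧ φ q < φ p ∧ φ p < φ s) := fun x => nc_conn hi h hX hY hd hr hp hq hs x.1 x.2.1 x.2.2
  have b4 : ¬ (φ r < φ s ∧ φ s < φ p ∧ φ p < φ q) := fun x => nc_conn hi h hX hY hd hr hp hs hq x.1 x.2.1 x.2.2
  have c1 : ¬ (φ q < φ p ∧ φ p < φ s ∧ φ s < φ r) := fun x => nc_conn hi h hY hX hd.symm hq hs hp hr x.1 x.2.1 x.2.2
  have c2 : ¬ (φ q < φ r ∧ φ r < φ s ∧ φ s < φ p) := fun x => nc_conn hi h hY hX hd.symm hq hs hr hp x.1 x.2.1 x.2.2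
  have c3 : ¬ (φ s < φ p ∧ φ p < φ q ∧ φ q < φ r) := fun x => nc_conn hi h hY hX hd.symm hs hq hp hr x.1 x.2.1 x.2.2
  have c4 : ¬ (φ s < φ r ∧ φ r < φ q ∧ φ q < φ p) := fun x => nc_conn hi h hY hX hd.symm hs hq hr hp x.1 x.2.1 x.2.2
  omega

theorem three_props (p q r : Prop) (h1 : ¬(p ↔ q)) (h2 : ¬(p ↔ r)) (h3 : ¬(q ↔ r)) : False := by
  tauto

theorem L4 (a b c d : ℕ) (d1 : a ≠ b) (d2 : a ≠ c) (d3 : a ≠ d) (d4 : b ≠ c) (d5 : b ≠ d) (d6 : c ≠ d)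
  (k1 : (a < c ∧ c < b ∨ b < c ∧ c < a) ↔ (a < d ∧ d < b ∨ b < d ∧ d < a))
  (k2 : (a < b ∧ b < c ∨ c < b ∧ b < a) ↔ (a < d ∧ d < c ∨ c < d ∧ d < a))
  (k3 : (a < b ∧ b < d ∨ d < b ∧ b < a) ↔ (a < c ∧ c < d ∨ d < c ∧ c < a)) : False := by
  rcases lt_or_gt_of_ne d1 with d1 | d1 <;> rcases lt_or_gt_of_ne d2 with d2 | d2 <;>
  rcases lt_or_gt_of_ne d3 with d3 | d3 <;>
  simp only [d1, d2, d3, d1.not_gt, d2.not_gt, d3.not_gt, true_and, and_true, false_and, and_false, or_false, false_or] at k1 k2 k3 <;> omega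
theorem L5 (a b c d : ℕ) (d1 : a ≠ b) (d2 : a ≠ c) (d3 : a ≠ d) (d4 : b ≠ c) (d5 : b ≠ d) (d6 : c ≠ d)
  (k1 : (a < b ∧ b < c ∨ c < b ∧ b < a) ↔ (a < d ∧ d < c ∨ c < d ∧ d < a))
  (k2 : (a < b ∧ b < d ∨ d < b ∧ b < a) ↔ (a < c ∧ c < d ∨ d < c ∧ c < a)) :
   ¬ ((a < c ∧ c < b ∨ b < c ∧ c < a) ↔ (a < d ∧ d < b ∨ b < d ∧ d < a)) := by
  intro k3
  rcases lt_or_gt_of_ne d1 with d1 | d1 <;> rcases lt_or_gt_of_ne d2 with d2 | d2 <;>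
  rcases lt_or_gt_of_ne d3 with d3 | d3 <;>
  simp only [d1, d2, d3, d1.not_gt, d2.not_gt, d3.not_gt, true_and, and_true, false_and, and_false, or_false, false_or] at k1 k2 k3 <;> omega

theorem nc_outer {V : Type*} {G : SimpleGraph V} {φ : V → ℕ} (hi : Function.Injective φ)
    (h : NC G φ) : Outerplanar G := by
  constructor
  · rintro ⟨f, h1, h2, h3, h4⟩
    have hc := fun w => conn_of_induce (h2 w)
    choose g hg using h1
    have hd : ∀ i j, i ≠ j → φ (g i) ≠ φ (g j) := fun i j hij e =>
      Set.disjoint_left.1 (h3 i j hij) (hg i) (hi e ▸ hg j)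
    have key : ∀ i j k l : Fin 4, i ≠ j → k ≠ l → i ≠ k → i ≠ l → j ≠ k → j ≠ l →
       (((φ (g i) < φ (g k) ∧ φ (g k) < φ (g j)) ∨ (φ (g j) < φ (g k) ∧ φ (g k) < φ (g i))) ↔
       ((φ (g i) < φ (g l) ∧ φ (g l) < φ (g j)) ∨ (φ (g j) < φ (g l) ∧ φ (g l) < φ (g i)))) := by
      intro i j k l a1 a2 a3 a4 a5 a6
      refine nc_conn' hi h ((hc i).union (hc j) (h4 i j a1)) ((hc k).union (hc l) (h4 k l a2))
        ?_ (Or.inl (hg i)) (Or.inr (hg j)) (Or.inl (hg k)) (Or.inr (hg l))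
      rw [Set.disjoint_union_left, Set.disjoint_union_right, Set.disjoint_union_right]
      exact ⟨⟨h3 _ _ a3, h3 _ _ a4⟩, h3 _ _ a5, h3 _ _ a6⟩
    have k1 := key 0 1 2 3 (by decide) (by decide) (by decide) (by decide) (by decide) (by decide)
    have k2 := key 0 2 1 3 (by decide) (by decide) (by decide) (by decide) (by decide) (by decide)
    have k3 := key 0 3 1 2 (by decide) (by decide) (by decide) (by decide) (by decide) (by decide)
    have d1 := hd 0 1 (by decide)
    have d2 := hd 0 2 (by decide)
    have d3 := hd 0 3 (by decide)
    have d4 := hd 1 2 (by decide)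
    have d5 := hd 1 3 (by decide)
    have d6 := hd 2 3 (by decide)
    exact L4 _ _ _ _ d1 d2 d3 d4 d5 d6 k1 k2 k3
  · rintro ⟨f, h1, h2, h3, h4⟩
    have hc := fun w => conn_of_induce (h2 w)
    choose g hg using h1
    have hd : ∀ i j, i ≠ j → φ (g i) ≠ φ (g j) := fun i j hij e =>
      Set.disjoint_left.1 (h3 i j hij) (hg i) (hi e ▸ hg j)
    have key : ∀ k l : Fin 3, k ≠ l →
       (((φ (g (.inl 0)) < φ (g (.inl 1)) ∧ φ (g (.inl 1)) < φ (g (.inr k))) ∨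
         (φ (g (.inr k)) < φ (g (.inl 1)) ∧ φ (g (.inl 1)) < φ (g (.inl 0)))) ↔
       ((φ (g (.inl 0)) < φ (g (.inr l)) ∧ φ (g (.inr l)) < φ (g (.inr k))) ∨
         (φ (g (.inr k)) < φ (g (.inr l)) ∧ φ (g (.inr l)) < φ (g (.inl 0))))) := by
      intro k l a1
      refine nc_conn' hi h ((hc (.inl 0)).union (hc (.inr k)) (h4 _ _ (by simp [K23])))
        ((hc (.inl 1)).union (hc (.inr l)) (h4 _ _ (by simp [K23])))
        ?_ (Or.inl (hg _)) (Or.inr (hg _)) (Or.inl (hg _)) (Or.inr (hg _))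
      rw [Set.disjoint_union_left, Set.disjoint_union_right, Set.disjoint_union_right]
      exact ⟨⟨h3 _ _ (by simp), h3 _ _ (by simp)⟩, h3 _ _ (by simp), h3 _ _ (by simpa using a1)⟩
    have d1 := hd (.inl 0) (.inl 1) (by decide)
    have e1 := fun i => hd (.inl 0) (.inr i) (by simp)
    have e2 := fun i => hd (.inl 1) (.inr i) (by simp)
    have key2 : ∀ k l : Fin 3, k ≠ l →
        ¬ (((φ (g (.inl 0)) < φ (g (.inr k)) ∧ φ (g (.inr k)) < φ (g (.inl 1))) ∨
          (φ (g (.inl 1)) < φ (g (.inr k)) ∧ φ (g (.inr k)) < φ (g (.inl 0)))) ↔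
          ((φ (g (.inl 0)) < φ (g (.inr l)) ∧ φ (g (.inr l)) < φ (g (.inl 1))) ∨
          (φ (g (.inl 1)) < φ (g (.inr l)) ∧ φ (g (.inr l)) < φ (g (.inl 0))))) := by
      intro k l hkl
      have k1 := key k l hkl
      have k2 := key l k hkl.symm
      have d2 := e1 k
      have d3 := e1 l
      have d4 := e2 k
      have d5 := e2 l
      have d6 := hd (.inr k) (.inr l) (by simpa using hkl)
      exact L5 _ _ _ _ d1 d2 d3 d4 d5 d6 k1 k2
    have k1 := key2 0 1 (by decide)
    have k2 := key2 0 2 (by decide)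
    have k3 := key2 1 2 (by decide)
    exact three_props _ _ _ k1 k2 k3

end NT

namespace NT

/-- No bad configuration inside `S`. -/
def Star {V : Type*} (G : SimpleGraph V) (S : Set V) (a b : V) : Prop :=
  ∀ A B C D : Set V, A ⊆ S → B ⊆ S → C ⊆ S → D ⊆ S → Conn G A → Conn G B → Conn G C → Conn G D →
    Disjoint A B → Disjoint A C → Disjoint A D → Disjoint B C → Disjoint B D → Disjoint C D →
    a ∈ A → b ∈ B → Edge G C A → Edge G C B → Edge G D A → Edge G D B → False

theorem Star.symm {V : Type*} {G : SimpleGraph V} {S : Set V} {a b : V} (h : Star G S a b) :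
    Star G S b a := by
  intro A B C D hA hB hC hD cA cB cC cD dAB dAC dAD dBC dBD dCD ha hb e1 e2 e3 e4
  exact h B A C D hB hA hC hD cB cA cC cD dAB.symm dBC dBD dAC dAD dCD hb ha e2 e1 e4 e3

theorem sep {V : Type*} [Finite V] {G : SimpleGraph V} {S : Set V} {a b : V} (hS : Star G S a b) :
    ∀ (n : ℕ) (M A B : Set V), M.ncard = n → M.Nonempty → M ⊆ S → A ⊆ S → B ⊆ S →
      Conn G A → Conn G B → Disjoint A B → Disjoint A M → Disjoint B M → a ∈ A → b ∈ B →
      ∃ c A₁ A₂, M = insert c (A₁ ∪ A₂) ∧ c ∉ A₁ ∧ c ∉ A₂ ∧ Disjoint A₁ A₂ ∧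
        ¬ Edge G A₁ A₂ ∧ ¬ Edge G A₁ B ∧ ¬ Edge G A₂ A := by
  intro n
  induction n with
  | zero =>
    intro M A B hn hne
    rw [Set.ncard_eq_zero (Set.toFinite _)] at hn
    exact absurd hn hne.ne_empty
  | succ n ih =>
    intro M A B hn hne hM hA hB cA cB dAB dAM dBM ha hb
    by_cases hx : ∃ x ∈ M, ∃ y ∈ A, G.Adj x y
    swap
    · obtain ⟨c, hc⟩ := hne
      refine ⟨c, ∅, M \ {c}, ?_, by simp, by simp, by simp, ?_, ?_, ?_⟩
      · simp [hc]
      · rintro ⟨x, hx, _⟩; exact hx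
      · rintro ⟨x, hx, _⟩; exact hx
      · rintro ⟨x, hx', y, hy⟩; exact hx ⟨x, hx'.1, y, hy⟩
    obtain ⟨x, hxM, y, hyA, hxy⟩ := hx
    by_cases hxB : ∃ z ∈ B, G.Adj x z
    · obtain ⟨z, hzB, hxz⟩ := hxB
      set A₁ : Set V := {v | ∃ D ⊆ M \ {x}, Conn G D ∧ Edge G D A ∧ v ∈ D} with hA1
      have hA1M : A₁ ⊆ M \ {x} := by
        rintro v ⟨D, hD, _, _, hv⟩
        exact hD hv
      refine ⟨x, A₁, (M \ {x}) \ A₁, ?_, ?_, ?_, Set.disjoint_sdiff_right, ?_, ?_, ?_⟩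
      · rw [Set.union_sdiff_cancel hA1M]; simp [hxM]
      · intro h; exact (hA1M h).2 rfl
      · intro h; exact h.1.2 rfl
      · rintro ⟨v, ⟨D, hD, cD, eD, hv⟩, w, hw, hvw⟩
        refine hw.2 ⟨insert w D, Set.insert_subset hw.1 hD, cD.insert hv hvw, 
          eD.mono (Set.subset_insert _ _) le_rfl, Or.inl rfl⟩
      · rintro ⟨v, ⟨D, hD, cD, eD, hv⟩, w, hw, hvw⟩
        have hDM : D ⊆ M := hD.trans Set.sdiff_subset
        have hxs : ({x} : Set V) ⊆ M := by simpa using hxM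
        refine hS A B {x} D hA hB (hxs.trans hM) (hDM.trans hM) cA cB (conn_singleton _ _) cD
          dAB (dAM.mono_right hxs) (dAM.mono_right hDM) (dBM.mono_right hxs) (dBM.mono_right hDM)
          ?_ ha hb ⟨x, rfl, y, hyA, hxy⟩ ⟨x, rfl, z, hzB, hxz⟩ eD ⟨v, hv, w, hw, hvw⟩
        rw [Set.disjoint_left]
        intro u hu hu'
        exact (hD hu').2 hu
      · rintro ⟨v, hv, w, hw, hvw⟩
        exact hv.2 ⟨{v}, by simpa using hv.1, conn_singleton _ _, ⟨v, rfl, w, hw, hvw⟩, rfl⟩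
    · by_cases hne' : (M \ {x}).Nonempty
      · obtain ⟨c, A₁, A₂, h1, h2, h3, h4, h5, h6, h7⟩ := ih (M \ {x}) (insert x A) B
          (by rw [Set.ncard_sdiff_singleton_of_mem hxM, hn]; rfl) hne' (Set.sdiff_subset.trans hM)
          (Set.insert_subset (hM hxM) hA) hB (cA.insert hyA hxy.symm) cB
          (by
            rw [Set.disjoint_insert_left]
            exact ⟨fun h => Set.disjoint_left.1 dBM h hxM, dAB⟩)
          (by
            rw [Set.disjoint_insert_left]
            exact ⟨fun h => h.2 rfl, dAM.mono_right Set.sdiff_subset⟩)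
          (dBM.mono_right Set.sdiff_subset) (Or.inr ha) hb
        have hxn : x ∉ insert c (A₁ ∪ A₂) := by rw [← h1]; exact fun h => h.2 rfl
        simp only [Set.mem_insert_iff, Set.mem_union, not_or] at hxn
        refine ⟨c, insert x A₁, A₂, ?_, ?_, h3, ?_, ?_, ?_, ?_⟩
        · rw [Set.insert_union, Set.insert_comm, ← h1]; simp [hxM]
        · rintro (h | h)
          · exact hxn.1 h.symm
          · exact h2 h
        · rw [Set.disjoint_insert_left]
          exact ⟨hxn.2.2, h4⟩
        · rintro ⟨u, rfl | hu, w, hw, huw⟩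
          · exact h7 ⟨w, hw, u, Or.inl rfl, huw.symm⟩
          · exact h5 ⟨u, hu, w, hw, huw⟩
        · rintro ⟨u, rfl | hu, w, hw, huw⟩
          · exact hxB ⟨w, hw, huw⟩
          · exact h6 ⟨u, hu, w, hw, huw⟩
        · exact fun h => h7 (h.mono le_rfl (Set.subset_insert _ _))
      · rw [Set.not_nonempty_iff_eq_empty] at hne'
        refine ⟨x, ∅, ∅, ?_, by simp, by simp, by simp, ?_, ?_, ?_⟩
        · rw [Set.sdiff_eq_empty] at hne'
          simp only [Set.union_empty, insert_empty_eq]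
          exact Set.Subset.antisymm hne' (by simpa using hxM)
        all_goals
          rintro ⟨x, hx, _⟩; exact hx

inductive Dec {V : Type*} (G : SimpleGraph V) : Set V → V → V → Prop
  | nil (a b : V) (h : a ≠ b) : Dec G ∅ a b
  | node (a b c : V) (A₁ A₂ : Set V) (hab : a ≠ b) (hac : a ≠ c) (hbc : b ≠ c)
    (ha1 : a ∉ A₁) (ha2 : a ∉ A₂) (hb1 : b ∉ A₁) (hb2 : b ∉ A₂) (hc1 : c ∉ A₁) (hc2 : c ∉ A₂)
    (hd : Disjoint A₁ A₂) (e12 : ¬ Edge G A₁ A₂) (e1b : ¬ Edge G A₁ {b}) (e2a : ¬ Edge G A₂ {a})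
    (h1 : Dec G A₁ a c) (h2 : Dec G A₂ c b) : Dec G (insert c (A₁ ∪ A₂)) a b

theorem Dec.symm {V : Type*} {G : SimpleGraph V} {M : Set V} {a b : V} (h : Dec G M a b) :
    Dec G M b a := by
  induction h with
  | nil a b h => exact .nil b a h.symm
  | node a b c A₁ A₂ hab hac hbc ha1 ha2 hb1 hb2 hc1 hc2 hd e12 e1b e2a h1 h2 ih1 ih2 =>
    rw [Set.union_comm]
    exact .node b a c A₂ A₁ hab.symm hbc hac hb2 hb1 ha2 ha1 hc2 hc1 hd.symm (fun h => e12 h.symm)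
      e2a e1b ih2 ih1

theorem Dec.mono {V : Type*} {G G' : SimpleGraph V} {M : Set V} {a b : V} (h : Dec G M a b)
    (hG : ∀ u ∈ M, ∀ v, (v ∈ M ∨ v = a ∨ v = b) → G'.Adj u v → G.Adj u v) : Dec G' M a b := by
  induction h with
  | nil a b h => exact .nil a b h
  | node a b c A₁ A₂ hab hac hbc ha1 ha2 hb1 hb2 hc1 hc2 hd e12 e1b e2a h1 h2 ih1 ih2 =>
    refine .node a b c A₁ A₂ hab hac hbc ha1 ha2 hb1 hb2 hc1 hc2 hd ?_ ?_ ?_ (ih1 ?_) (ih2 ?_)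
    · rintro ⟨u, hu, v, hv, h⟩
      exact e12 ⟨u, hu, v, hv, hG u (by simp [hu]) v (by simp [hv]) h⟩
    · rintro ⟨u, hu, v, rfl, h⟩
      exact e1b ⟨u, hu, v, rfl, hG u (by simp [hu]) v (by simp) h⟩
    · rintro ⟨u, hu, v, rfl, h⟩
      exact e2a ⟨u, hu, v, rfl, hG u (by simp [hu]) v (by simp) h⟩
    · intro u hu v hv
      exact hG u (by simp [hu]) v (by simp only [Set.mem_insert_iff, Set.mem_union]; tauto)
    · intro u hu v hv
      exact hG u (by simp [hu]) v (by simp only [Set.mem_insert_iff, Set.mem_union]; tauto)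

theorem Dec.add {V : Type*} {G : SimpleGraph V} {M : Set V} {a b : V} (h : Dec G M a b)
    (hne : M.Nonempty) : ∃ c ∈ M, c ≠ a ∧ c ≠ b ∧
      Dec (G ⊔ SimpleGraph.fromEdgeSet {s(a, c)}) M a b ∧
      Dec (G ⊔ SimpleGraph.fromEdgeSet {s(b, c)}) M a b := by
  cases h with
  | nil a b h => exact absurd rfl hne.ne_empty
  | node a b c A₁ A₂ hab hac hbc ha1 ha2 hb1 hb2 hc1 hc2 hd e12 e1b e2a h1 h2 =>
    refine ⟨c, by simp, hac.symm, hbc.symm, ?_, ?_⟩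
    all_goals
      have key : ∀ x y u v : V, u ≠ x → u ≠ y →
        (G ⊔ SimpleGraph.fromEdgeSet {s(x, y)}).Adj u v → G.Adj u v := by
        intro x y u v hx hy h
        simp only [sup_adj, fromEdgeSet_adj, Set.mem_singleton_iff, Sym2.eq_iff] at h
        tauto
      refine .node a b c A₁ A₂ hab hac hbc ha1 ha2 hb1 hb2 hc1 hc2 hd ?_ ?_ ?_ (h1.mono ?_)
        (h2.mono ?_)
      · rintro ⟨u, hu, v, hv, h⟩
        exact e12 ⟨u, hu, v, hv, key _ _ u v (by grind) (by grind) h⟩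
      · rintro ⟨u, hu, v, rfl, h⟩
        exact e1b ⟨u, hu, v, rfl, key _ _ u v (by grind) (by grind) h⟩
      · rintro ⟨u, hu, v, rfl, h⟩
        exact e2a ⟨u, hu, v, rfl, key _ _ u v (by grind) (by grind) h⟩
      · intro u hu v hv h
        exact key _ _ u v (by grind) (by grind) h
      · intro u hu v hv h
        exact key _ _ u v (by grind) (by grind) h

/-- two-connectedness -/
def Two {V : Type*} (G : SimpleGraph V) (M : Set V) (a b : V) : Prop :=
  ∀ K ⊆ M, K.Nonempty → ∀ s, s ∉ K → ∃ u ∈ K, ∃ v, v ∉ K ∧ (v ∈ M ∨ v = a ∨ v = b) ∧ v ≠ s ∧ G.Adj u v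

theorem Two.symm {V : Type*} {G : SimpleGraph V} {M : Set V} {a b : V} (h : Two G M a b) :
    Two G M b a := by
  intro K hK hne s hs
  obtain ⟨u, hu, v, h1, h2, h3, h4⟩ := h K hK hne s hs
  exact ⟨u, hu, v, h1, by tauto, h3, h4⟩

theorem sub_aux {V : Type*} [Finite V] {G : SimpleGraph V} {a b c : V} {A₁ A₂ : Set V}
    (hab : a ≠ b) (hac : a ≠ c) (hbc : b ≠ c)
    (ha1 : a ∉ A₁) (ha2 : a ∉ A₂) (hb1 : b ∉ A₁) (hb2 : b ∉ A₂) (hc1 : c ∉ A₁) (hc2 : c ∉ A₂)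
    (hd : Disjoint A₁ A₂) (e12 : ¬ Edge G A₁ A₂) (e1b : ¬ Edge G A₁ {b}) (e2a : ¬ Edge G A₂ {a})
    (hT : Two G (insert c (A₁ ∪ A₂)) a b)
    (hS : Star G (insert a (insert b (insert c (A₁ ∪ A₂)))) a b) :
    Two G A₁ a c ∧ Star G (insert a (insert c A₁)) a c := by
  constructor
  · intro K hK hne s hs
    obtain ⟨u, hu, v, h1, h2, h3, h4⟩ := hT K (fun x hx => by simp [hK hx]) hne s hs
    refine ⟨u, hu, v, h1, ?_, h3, h4⟩
    simp only [Set.mem_insert_iff, Set.mem_union] at h2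
    have n1 : v ∉ A₂ := fun h => e12 ⟨u, hK hu, v, h, h4⟩
    have n2 : v ≠ b := fun h => e1b ⟨u, hK hu, v, h, h4⟩
    tauto
  · obtain ⟨R, hR, hcR, cR, hRc⟩ := exists_comp G (insert c A₂) c (by simp)
    have hRb : ∃ u ∈ R, G.Adj u b := by
      obtain ⟨u, hu, v, h1, h2, h3, h4⟩ := hT (A₁ ∪ R)
        (by
          rintro x (hx | hx)
          · simp [hx]
          · have := hR hx
            simp only [Set.mem_insert_iff, Set.mem_union] at this ⊢
            tauto) ⟨c, Or.inr hcR⟩ a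
        (by
          rintro (h | h)
          · exact ha1 h
          · rcases hR h with h | h
            · exact hac h
            · exact ha2 h)
      simp only [Set.mem_insert_iff, Set.mem_union] at h2
      have hvc : v ≠ c := by rintro rfl; exact h1 (Or.inr hcR)
      have hv1 : v ∉ A₁ := fun h => h1 (Or.inl h)
      rcases hu with hu | hu
      · have n1 : v ∉ A₂ := fun h => e12 ⟨u, hu, v, h, h4⟩
        have n2 : v ≠ b := fun h => e1b ⟨u, hu, v, h, h4⟩
        tauto
      · have n1 : v ∉ A₂ := fun h => h1 (Or.inr (hRc u hu v (Or.inr h) h4))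
        have : v = b := by tauto
        subst this
        exact ⟨u, hu, h4⟩
    obtain ⟨u, huR, hub⟩ := hRb
    have cRb : Conn G (insert b R) := cR.insert huR hub
    have dRb : ∀ x ∈ insert b R, x ∉ insert a A₁ := by
      rintro x hx hx'
      have := Set.disjoint_left.1 hd
      have := @hR x
      simp only [Set.mem_insert_iff] at *
      grind
    intro A B C D hA hB hC hD cA cB cC cD dAB dAC dAD dBC dBD dCD ha hc e1 e2 e3 e4
    have hcA : c ∉ A := Set.disjoint_right.1 dAB hc
    have hcC : c ∉ C := Set.disjoint_left.1 dBC hc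
    have hcD : c ∉ D := Set.disjoint_left.1 dBD hc
    have hdis : ∀ X : Set V, X ⊆ insert a (insert c A₁) → c ∉ X → Disjoint X (insert b R) := by
      intro X hX hcX
      rw [Set.disjoint_left]
      intro x hx hx'
      apply dRb x hx'
      have := hX hx
      simp only [Set.mem_insert_iff] at this ⊢
      rcases this with h | h | h
      · exact Or.inl h
      · exact absurd (h ▸ hx) hcX
      · exact Or.inr h
    have hsub : insert a (insert c A₁) ⊆ insert a (insert b (insert c (A₁ ∪ A₂))) := by
      intro x; simp only [Set.mem_insert_iff, Set.mem_union]; tauto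
    refine hS A (B ∪ insert b R) C D (hA.trans hsub) (Set.union_subset (hB.trans hsub) ?_)
      (hC.trans hsub) (hD.trans hsub) cA (cB.union_inter cRb ⟨c, hc, Or.inr hcR⟩) cC cD
      (Set.disjoint_union_right.2 ⟨dAB, hdis A hA hcA⟩) dAC dAD
      (Set.disjoint_union_left.2 ⟨dBC, (hdis C hC hcC).symm⟩)
      (Set.disjoint_union_left.2 ⟨dBD, (hdis D hD hcD).symm⟩) dCD ha (Or.inr (Or.inl rfl))
      e1 (e2.mono le_rfl Set.subset_union_left) e3 (e4.mono le_rfl Set.subset_union_left)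
    intro x hx
    have := @hR x
    simp only [Set.mem_insert_iff, Set.mem_union] at *
    tauto

theorem dec_of {V : Type*} [Finite V] {G : SimpleGraph V} :
    ∀ (n : ℕ) (M : Set V) (a b : V), M.ncard ≤ n → a ≠ b → a ∉ M → b ∉ M → Two G M a b →
      Star G (insert a (insert b M)) a b → Dec G M a b := by
  intro n
  induction n with
  | zero =>
    intro M a b hn hab _ _ _ _
    have : M = ∅ := by
      rw [← Set.ncard_eq_zero (Set.toFinite _)]; omega
    subst this
    exact .nil a b hab
  | succ n ih =>
    intro M a b hn hab ha hb hT hS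
    rcases M.eq_empty_or_nonempty with rfl | hne
    · exact .nil a b hab
    obtain ⟨c, A₁, A₂, rfl, hc1, hc2, hd, e12, e1b, e2a⟩ := sep hS _ M {a} {b} rfl hne
      (by intro x; simp; tauto) (by simp) (by simp) (conn_singleton _ _) (conn_singleton _ _)
      (by simpa using hab) (by simpa using ha) (by simpa using hb) rfl rfl
    simp only [Set.mem_insert_iff, Set.mem_union, not_or] at ha hb
    rw [Set.ncard_insert_of_notMem (by simp [hc1, hc2]) (Set.toFinite _),
      Set.ncard_union_eq hd (Set.toFinite _) (Set.toFinite _)] at hn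
    obtain ⟨t1, s1⟩ := sub_aux hab ha.1 hb.1 ha.2.1 ha.2.2 hb.2.1 hb.2.2 hc1 hc2 hd e12 e1b e2a hT hS
    obtain ⟨t2, s2⟩ := sub_aux (a := b) (b := a) (c := c) (A₁ := A₂) (A₂ := A₁) hab.symm hb.1 ha.1
      hb.2.2 hb.2.1 ha.2.2 ha.2.1 hc2 hc1 hd.symm (fun h => e12 h.symm) e2a e1b
      (by rw [Set.union_comm]; exact hT.symm)
      (by rw [Set.union_comm, Set.insert_comm]; exact hS.symm)
    exact .node a b c A₁ A₂ hab ha.1 hb.1 ha.2.1 ha.2.2 hb.2.1 hb.2.2 hc1 hc2 hd e12 e1b e2a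
      (ih A₁ a c (by omega) ha.1 ha.2.1 hc1 t1 s1)
      (ih A₂ b c (by omega) hb.1 hb.2.2 hc2 t2 s2).symm

end NT

namespace NT

theorem conn_compl {V : Type*} {G : SimpleGraph V} {A A₀ : Set V} {y : V} (hA : Conn G A)
    (hy : y ∈ A) (hyA : y ∉ A₀) (hcl : ∀ x ∈ A₀, ∀ z ∈ A \ {y}, G.Adj x z → z ∈ A₀) :
    Conn G (A \ A₀) := by
  refine ⟨⟨y, hy, hyA⟩, ?_⟩
  rintro U ⟨p, hp, hpU⟩ ⟨q, hq, hqU⟩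
  by_cases hyU : y ∈ U
  · obtain ⟨w, hw, v, hv, hwW, hvW, hwv⟩ := hA.2 ((A \ A₀) \ U) ⟨q, hq.1, hq, hqU⟩
      ⟨y, hy, fun h => h.2 hyU⟩
    have hv0 : v ∉ A₀ := fun h => hwW.1.2 (hcl v h w ⟨hw, by rintro rfl; exact hwW.2 hyU⟩ hwv.symm)
    have hvU : v ∈ U := by
      by_contra h
      exact hvW ⟨⟨hv, hv0⟩, h⟩
    exact ⟨v, ⟨hv, hv0⟩, w, hwW.1, hvU, hwW.2, hwv.symm⟩
  · obtain ⟨w, hw, v, hv, hwW, hvW, hwv⟩ := hA.2 ((A \ A₀) ∩ U) ⟨p, hp.1, hp, hpU⟩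
      ⟨y, hy, fun h => hyU h.2⟩
    have hv0 : v ∉ A₀ := fun h => hwW.1.2 (hcl v h w ⟨hw, by rintro rfl; exact hyU hwW.2⟩ hwv.symm)
    have hvU : v ∉ U := fun h => hvW ⟨⟨hv, hv0⟩, h⟩
    exact ⟨w, hwW.1, v, ⟨hv, hv0⟩, hwW.2, hvU, hwv⟩

structure Bad {V : Type*} (G : SimpleGraph V) (a b : V) (A B C D : Set V) : Prop where
  cA : Conn G A
  cB : Conn G B
  cC : Conn G C
  cD : Conn G D
  dAB : Disjoint A B
  dAC : Disjoint A C
  dAD : Disjoint A D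
  dBC : Disjoint B C
  dBD : Disjoint B D
  dCD : Disjoint C D
  ha : a ∈ A
  hb : b ∈ B
  e1 : Edge G C A
  e2 : Edge G C B
  e3 : Edge G D A
  e4 : Edge G D B

theorem Bad.symm {V : Type*} {G : SimpleGraph V} {a b : V} {A B C D : Set V}
    (h : Bad G a b A B C D) : Bad G b a B A C D :=
  ⟨h.cB, h.cA, h.cC, h.cD, h.dAB.symm, h.dBC, h.dBD, h.dAC, h.dAD, h.dCD, h.hb, h.ha, h.e2, h.e1,
    h.e4, h.e3⟩

theorem bad_step {V : Type*} [Finite V] {G : SimpleGraph V} {a b : V} {A B C D : Set V}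
    (h : Bad G a b A B C D) (hab : G.Adj a b) (h23 : ¬ IsMinor K23 G)
    {x y : V} (hx : x ∈ C) (hy : y ∈ A) (hya : y ≠ a) (hxy : G.Adj x y) :
    ∃ A' C', Bad G a b A' B C' D ∧ C ⊆ C' ∧ y ∈ C' := by
  obtain ⟨A₀, h0, haA, cA0, hcl⟩ := exists_comp G (A \ {y}) a ⟨h.ha, fun e => hya e.symm⟩
  have hA0 : A₀ ⊆ A := h0.trans Set.sdiff_subset
  have hyA : y ∉ A₀ := fun e => (h0 e).2 rfl
  have cX : Conn G (A \ A₀) := conn_compl h.cA hy hyA hcl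
  have hXA : A \ A₀ ⊆ A := Set.sdiff_subset
  have e0 : Edge G A₀ (A \ A₀) := by
    obtain ⟨p, hp, q, hq, hpU, hqU, hpq⟩ := h.cA.2 A₀ ⟨a, h.ha, haA⟩ ⟨y, hy, hyA⟩
    exact ⟨p, hpU, q, ⟨hq, hqU⟩, hpq⟩
  have eC : Edge G C (A \ A₀) := ⟨x, hx, y, ⟨hy, hyA⟩, hxy⟩
  have d0 : Disjoint A₀ (A \ A₀) := Set.disjoint_sdiff_right
  by_cases hD : Edge G D A₀
  · refine ⟨A₀, C ∪ (A \ A₀), ?_, Set.subset_union_left, Or.inr ⟨hy, hyA⟩⟩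
    exact ⟨cA0, h.cB, h.cC.union cX eC, h.cD, h.dAB.mono_left hA0,
      Set.disjoint_union_right.2 ⟨h.dAC.mono_left hA0, d0⟩, h.dAD.mono_left hA0,
      Set.disjoint_union_right.2 ⟨h.dBC, (h.dAB.mono_left hXA).symm⟩, h.dBD,
      Set.disjoint_union_left.2 ⟨h.dCD, h.dAD.mono_left hXA⟩, haA, h.hb,
      (e0.mono le_rfl Set.subset_union_right).symm, h.e2.mono Set.subset_union_left le_rfl,
      hD, h.e4⟩
  · exfalso
    have hDX : Edge G D (A \ A₀) := by
      obtain ⟨p, hp, q, hq, hpq⟩ := h.e3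
      exact ⟨p, hp, q, ⟨hq, fun e => hD ⟨p, hp, q, e, hpq⟩⟩, hpq⟩
    exact h23 (k23_of cX h.cB h.cC h.cD cA0 (h.dAB.mono_left hXA) (h.dAC.mono_left hXA)
      (h.dAD.mono_left hXA) d0.symm h.dBC h.dBD (h.dAB.mono_left hA0).symm h.dCD
      (h.dAC.mono_left hA0).symm (h.dAD.mono_left hA0).symm eC.symm hDX.symm e0.symm
      h.e2.symm h.e4.symm ⟨b, h.hb, a, haA, hab.symm⟩)

theorem no_bad {V : Type*} [Finite V] {G : SimpleGraph V} {a b : V} (hab : G.Adj a b)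
    (h4 : ¬ IsMinor K4 G) (h23 : ¬ IsMinor K23 G) (hM : Conn G {v | v ≠ a ∧ v ≠ b})
    {A B C D : Set V} (h : Bad G a b A B C D) : False := by
  obtain ⟨C, hC⟩ := Set.Finite.exists_maximal (s := {C : Set V | ∃ A B D, Bad G a b A B C D})
    (Set.toFinite _) ⟨C, A, B, D, h⟩
  clear h
  obtain ⟨A, B, D, h⟩ := hC.prop
  have hmax : ∀ A' B' C', Bad G a b A' B' C' D → C ⊆ C' → C' ⊆ C := fun A' B' C' h' hs =>
    hC.le_of_ge (y := C') ⟨A', B', D, h'⟩ hs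
  by_cases hCD : Edge G C D
  · exact h4 (k4_of h.cA h.cB h.cC h.cD h.dAB h.dAC h.dAD h.dBC h.dBD h.dCD ⟨a, h.ha, b, h.hb, hab⟩
      h.e1.symm h.e3.symm h.e2.symm h.e4.symm hCD)
  obtain ⟨c, hc⟩ := h.cC.1
  obtain ⟨d, hd⟩ := h.cD.1
  obtain ⟨x, hx, y, hy, hxC, hyC, hxy⟩ := hM.2 C
    ⟨c, ⟨by rintro rfl; exact Set.disjoint_left.1 h.dAC h.ha hc,
      by rintro rfl; exact Set.disjoint_left.1 h.dBC h.hb hc⟩, hc⟩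
    ⟨d, ⟨by rintro rfl; exact Set.disjoint_left.1 h.dAD h.ha hd,
      by rintro rfl; exact Set.disjoint_left.1 h.dBD h.hb hd⟩,
      fun e => Set.disjoint_left.1 h.dCD e hd⟩
  have hyD : y ∉ D := fun e => hCD ⟨x, hxC, y, e, hxy⟩
  by_cases hyA : y ∈ A
  · obtain ⟨A', C', h', hs, hy'⟩ := bad_step h hab h23 hxC hyA hy.1 hxy
    exact hyC (hmax _ _ _ h' hs hy')
  by_cases hyB : y ∈ B
  · obtain ⟨A', C', h', hs, hy'⟩ := bad_step h.symm hab.symm h23 hxC hyB hy.2 hxy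
    exact hyC (hmax _ _ _ h'.symm hs hy')
  refine hyC (hmax A B (insert y C) ?_ (Set.subset_insert _ _) (Or.inl rfl))
  have hs := Set.subset_insert y C
  exact ⟨h.cA, h.cB, h.cC.insert hxC hxy, h.cD, h.dAB, Set.disjoint_insert_right.2 ⟨hyA, h.dAC⟩,
    h.dAD, Set.disjoint_insert_right.2 ⟨hyB, h.dBC⟩, h.dBD, Set.disjoint_insert_left.2 ⟨hyD, h.dCD⟩,
    h.ha, h.hb, h.e1.mono hs le_rfl, h.e2.mono hs le_rfl, h.e3, h.e4⟩

/-- The linear order on the vertices of a decomposed piece. -/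
def Ord {V : Type*} (G : SimpleGraph V) (M : Set V) (a b : V) (φ : V → ℕ) : Prop :=
  (∀ u ∈ insert a (insert b M), ∀ v ∈ insert a (insert b M), φ u = φ v → u = v) ∧
  (∀ v ∈ insert a (insert b M), φ a ≤ φ v ∧ φ v ≤ φ b) ∧
  (∀ u ∈ insert a (insert b M), ∀ v ∈ insert a (insert b M), ∀ x ∈ insert a (insert b M),
    ∀ y ∈ insert a (insert b M), G.Adj u v → G.Adj x y →
      φ u < φ x → φ x < φ v → φ v < φ y → False)

theorem Dec.ne {V : Type*} {G : SimpleGraph V} {M : Set V} {a b : V} (h : Dec G M a b) :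
    a ≠ b := by
  cases h <;> assumption

theorem Dec.ord {V : Type*} {G : SimpleGraph V} {M : Set V} {a b : V} (h : Dec G M a b) :
    ∃ φ, Ord G M a b φ := by
  classical
  induction h with
  | nil a b h =>
    refine ⟨fun v => if v = a then 0 else 1, ?_, ?_, ?_⟩
    · intro u hu v hv
      simp only [Set.mem_insert_iff, Set.mem_empty_iff_false, or_false] at hu hv
      grind
    · intro u hu
      simp only [Set.mem_insert_iff, Set.mem_empty_iff_false, or_false] at hu
      grind
    · intro u hu v hv x hx y hy
      grind
  | node a b c A₁ A₂ hab hac hbc ha1 ha2 hb1 hb2 hc1 hc2 hd e12 e1b e2a h1 h2 ih1 ih2 =>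
    obtain ⟨φ₁, i1, m1, n1⟩ := ih1
    obtain ⟨φ₂, i2, m2, n2⟩ := ih2
    set S₁ := insert a (insert c A₁) with hS1
    set S₂ := insert c (insert b A₂) with hS2
    have m12 : ∀ v, v ∈ S₁ → v ∈ S₂ → v = c := by
      have := Set.disjoint_left.1 hd
      intro v
      simp only [hS1, hS2, Set.mem_insert_iff]
      grind
    have hcS1 : c ∈ S₁ := by simp [hS1]
    have hcS2 : c ∈ S₂ := by simp [hS2]
    have haS1 : a ∈ S₁ := by simp [hS1]
    have hbS2 : b ∈ S₂ := by simp [hS2]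
    have hcov : ∀ v ∈ insert a (insert b (insert c (A₁ ∪ A₂))), v ∈ S₁ ∨ v ∈ S₂ := by
      intro v
      simp only [hS1, hS2, Set.mem_insert_iff, Set.mem_union]
      tauto
    have hedge : ∀ u ∈ insert a (insert b (insert c (A₁ ∪ A₂))),
        ∀ v ∈ insert a (insert b (insert c (A₁ ∪ A₂))), G.Adj u v →
        (u ∈ S₁ ∧ v ∈ S₁) ∨ (u ∈ S₂ ∧ v ∈ S₂) ∨ (u = a ∧ v = b) ∨ (u = b ∧ v = a) := by
      intro u hu v hv huv
      have e1 : u ∈ A₁ → v ∉ A₂ := fun h h' => e12 ⟨u, h, v, h', huv⟩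
      have e2 : v ∈ A₁ → u ∉ A₂ := fun h h' => e12 ⟨v, h, u, h', huv.symm⟩
      have e3 : u ∈ A₁ → v ≠ b := fun h h' => e1b ⟨u, h, v, h', huv⟩
      have e4 : v ∈ A₁ → u ≠ b := fun h h' => e1b ⟨v, h, u, h', huv.symm⟩
      have e5 : u ∈ A₂ → v ≠ a := fun h h' => e2a ⟨u, h, v, h', huv⟩
      have e6 : v ∈ A₂ → u ≠ a := fun h h' => e2a ⟨v, h, u, h', huv.symm⟩
      simp only [hS1, hS2, Set.mem_insert_iff, Set.mem_union] at hu hv ⊢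
      grind
    unfold Ord
    generalize S₁ = S₁ at *
    generalize S₂ = S₂ at *
    generalize insert a (insert b (insert c (A₁ ∪ A₂))) = S at *
    obtain ⟨φ, hφ⟩ : ∃ φ : V → ℕ, φ = fun v => if v ∈ S₁ then φ₁ v else φ₁ c + 1 + φ₂ v := ⟨_, rfl⟩
    have f1 : ∀ v ∈ S₁, φ v = φ₁ v := by intro v hv; simp [hφ, hv]
    have f2 : ∀ v ∈ S₂, v ≠ c → φ v = φ₁ c + 1 + φ₂ v := by
      intro v hv hvc
      have : v ∉ S₁ := fun h => hvc (m12 v h hv)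
      simp [hφ, this]
    have fc := f1 c hcS1
    have f3 : ∀ v ∈ S₂, φ c ≤ φ v := by
      intro v hv
      by_cases hvc : v = c
      · rw [hvc]
      · have := f2 v hv hvc; omega
    have f4 : ∀ v ∈ S₂, ∀ w ∈ S₂, φ v < φ w → φ₂ v < φ₂ w := by
      intro v hv w hw hvw
      have hwc : w ≠ c := by
        rintro rfl
        have := f3 v hv; omega
      have h2 := f2 w hw hwc
      by_cases hvc : v = c
      · subst hvc
        have := (m2 w hw).1
        have : φ₂ v ≠ φ₂ w := fun e => hwc (i2 _ hv _ hw e).symm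
        omega
      · have := f2 v hv hvc; omega
    have f5 : ∀ v ∈ S₁, φ a ≤ φ v ∧ φ v ≤ φ c := by
      intro v hv
      rw [f1 v hv, f1 a haS1, fc]
      exact m1 v hv
    have f6 : ∀ v ∈ S₂, φ v ≤ φ b := by
      intro v hv
      by_contra hlt
      have := f4 b hbS2 v hv (by omega)
      have := (m2 v hv).2
      omega
    have fab : ∀ v ∈ S, φ a ≤ φ v ∧ φ v ≤ φ b := by
      intro v hv
      have := (f5 c hcS1).1
      have := f3 b hbS2
      rcases hcov v hv with h | h
      · have := f5 v h; omega
      · have := f3 v h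
        have := f6 v h; omega
    refine ⟨φ, ?_, fab, ?_⟩
    · have key : ∀ u ∈ S₁, ∀ v ∈ S₂, φ u = φ v → u = v := by
        intro u hu v hv e
        by_cases hvc : v = c
        · subst hvc
          rw [f1 u hu, fc] at e
          exact i1 u hu v hcS1 e
        · have := f2 v hv hvc
          have := (f5 u hu).2
          omega
      intro u hu v hv e
      rcases hcov u hu with hu | hu <;> rcases hcov v hv with hv | hv
      · rw [f1 u hu, f1 v hv] at e
        exact i1 u hu v hv e
      · exact key u hu v hv e
      · exact (key v hv u hu e.symm).symm
      · by_cases huc : u = c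
        · subst huc; exact key u hcS1 v hv e
        · by_cases hvc : v = c
          · subst hvc; exact (key v hcS1 u hu e.symm).symm
          · rw [f2 u hu huc, f2 v hv hvc] at e
            exact i2 u hu v hv (by omega)
    · intro u hu v hv x hx y hy huv hxy l1 l2 l3
      have bu := fab u hu
      have bv := fab v hv
      have bx := fab x hx
      have bY := fab y hy
      rcases hedge u hu v hv huv with ⟨pu, pv⟩ | ⟨pu, pv⟩ | ⟨rfl, rfl⟩ | ⟨rfl, rfl⟩
      · rcases hedge x hx y hy hxy with ⟨px, py⟩ | ⟨px, py⟩ | ⟨rfl, rfl⟩ | ⟨rfl, rfl⟩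
        · rw [f1 u pu, f1 x px] at l1
          rw [f1 x px, f1 v pv] at l2
          rw [f1 v pv, f1 y py] at l3
          exact n1 u pu v pv x px y py huv hxy l1 l2 l3
        · have := f5 v pv
          have := f3 x px
          omega
        · omega
        · omega
      · rcases hedge x hx y hy hxy with ⟨px, py⟩ | ⟨px, py⟩ | ⟨rfl, rfl⟩ | ⟨rfl, rfl⟩
        · have := f5 y py
          have := f3 u pu
          omega
        · exact n2 u pu v pv x px y py huv hxy (f4 _ pu _ px l1) (f4 _ px _ pv l2)
            (f4 _ pv _ py l3)
        · omega
        · omega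
      · omega
      · omega

theorem two_sided {V : Type*} {G : SimpleGraph V} {P Q : Set V} {a b : V} (hP : Dec G P a b)
    (hQ : Dec G Q b a) (hd : Disjoint P Q) (haP : a ∉ P) (hbP : b ∉ P) (haQ : a ∉ Q) (hbQ : b ∉ Q)
    (hcov : ∀ v, v = a ∨ v = b ∨ v ∈ P ∨ v ∈ Q) (hPQ : ¬ Edge G P Q) : Outerplanar G := by
  classical
  have hab := hP.ne
  obtain ⟨φ₁, i1, m1, n1⟩ := hP.ord
  obtain ⟨φ₂, i2, m2, n2⟩ := hQ.ord
  set S₁ := insert a (insert b P) with hS1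
  set S₂ := insert b (insert a Q) with hS2
  have m12 : ∀ v, v ∈ S₁ → v ∈ S₂ → v = a ∨ v = b := by
    have := Set.disjoint_left.1 hd
    intro v
    simp only [hS1, hS2, Set.mem_insert_iff]
    grind
  have haS1 : a ∈ S₁ := by simp [hS1]
  have haS2 : a ∈ S₂ := by simp [hS2]
  have hbS1 : b ∈ S₁ := by simp [hS1]
  have hbS2 : b ∈ S₂ := by simp [hS2]
  have hcov' : ∀ v, v ∈ S₁ ∨ v ∈ S₂ := by
    intro v
    have := hcov v
    simp only [hS1, hS2, Set.mem_insert_iff]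
    tauto
  have hedge : ∀ u v, G.Adj u v → (u ∈ S₁ ∧ v ∈ S₁) ∨ (u ∈ S₂ ∧ v ∈ S₂) := by
    intro u v huv
    have e1 : u ∈ P → v ∉ Q := fun h h' => hPQ ⟨u, h, v, h', huv⟩
    have e2 : v ∈ P → u ∉ Q := fun h h' => hPQ ⟨v, h, u, h', huv.symm⟩
    have q1 := hcov u
    have q2 := hcov v
    simp only [hS1, hS2, Set.mem_insert_iff]
    clear i1 m1 n1 i2 m2 n2 m12 hcov' hcov hd
    grind
  generalize S₁ = S₁ at *
  generalize S₂ = S₂ at *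
  obtain ⟨φ, hφ⟩ : ∃ φ : V → ℕ, φ = fun v => if v ∈ S₁ then φ₁ v else φ₁ b + 1 + φ₂ v := ⟨_, rfl⟩
  have f1 : ∀ v ∈ S₁, φ v = φ₁ v := by intro v hv; simp [hφ, hv]
  have f2 : ∀ v ∈ S₂, v ≠ a → v ≠ b → φ v = φ₁ b + 1 + φ₂ v := by
    intro v hv hva hvb
    have : v ∉ S₁ := fun h => by have := m12 v h hv; tauto
    simp [hφ, this]
  have fb := f1 b hbS1
  have fa := f1 a haS1
  have fab := (m1 b hbS1).1
  have f3 : ∀ v ∈ S₂, v ≠ a → φ b ≤ φ v := by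
    intro v hv hva
    by_cases hvb : v = b
    · rw [hvb]
    · have := f2 v hv hva hvb; omega
  have f4 : ∀ v ∈ S₂, ∀ w ∈ S₂, v ≠ a → w ≠ a → φ v < φ w → φ₂ v < φ₂ w := by
    intro v hv w hw hva hwa hvw
    have hwb : w ≠ b := by
      rintro rfl
      have := f3 v hv hva; omega
    have h2 := f2 w hw hwa hwb
    by_cases hvb : v = b
    · subst hvb
      have := (m2 w hw).1
      have : φ₂ v ≠ φ₂ w := fun e => hwb (i2 _ hv _ hw e).symm
      omega
    · have := f2 v hv hva hvb; omega
  have f5 : ∀ v ∈ S₁, φ a ≤ φ v ∧ φ v ≤ φ b := by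
    intro v hv
    rw [f1 v hv, fa, fb]
    exact m1 v hv
  have f6 : ∀ v, φ a ≤ φ v := by
    intro v
    rcases hcov' v with h | h
    · exact (f5 v h).1
    · by_cases hva : v = a
      · rw [hva]
      · have := f3 v h hva; omega
  have hi : Function.Injective φ := by
    have key : ∀ u ∈ S₁, ∀ v ∈ S₂, φ u = φ v → u = v := by
      intro u hu v hv e
      by_cases hv1 : v ∈ S₁
      · rw [f1 u hu, f1 v hv1] at e
        exact i1 u hu v hv1 e
      · have := f2 v hv (by rintro rfl; exact hv1 haS1) (by rintro rfl; exact hv1 hbS1)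
        have := (f5 u hu).2
        omega
    intro u v e
    by_cases hu : u ∈ S₁
    · by_cases hv : v ∈ S₁
      · rw [f1 u hu, f1 v hv] at e
        exact i1 u hu v hv e
      · exact key u hu v ((hcov' v).resolve_left hv) e
    · have hu2 := (hcov' u).resolve_left hu
      by_cases hv : v ∈ S₁
      · exact (key v hv u hu2 e.symm).symm
      · have hv2 := (hcov' v).resolve_left hv
        rw [f2 u hu2 (by rintro rfl; exact hu haS1) (by rintro rfl; exact hu hbS1),
          f2 v hv2 (by rintro rfl; exact hv haS1) (by rintro rfl; exact hv hbS1)] at e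
        exact i2 u hu2 v hv2 (by omega)
  refine nc_outer hi ?_
  intro u v x y huv hxy l1 l2 l3
  have bu := f6 u
  have hva : v ≠ a := by rintro rfl; omega
  have hxa : x ≠ a := by rintro rfl; omega
  have hya : y ≠ a := by rintro rfl; omega
  rcases hedge u v huv with ⟨pu, pv⟩ | ⟨pu, pv⟩
  · rcases hedge x y hxy with ⟨px, py⟩ | ⟨px, py⟩
    · rw [f1 u pu, f1 x px] at l1
      rw [f1 x px, f1 v pv] at l2
      rw [f1 v pv, f1 y py] at l3
      exact n1 u pu v pv x px y py huv hxy l1 l2 l3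
    · have := f5 v pv
      have := f3 x px hxa
      omega
  · rcases hedge x y hxy with ⟨px, py⟩ | ⟨px, py⟩
    · have := f5 y py
      have := f3 v pv hva
      omega
    · by_cases hua : u = a
      · subst hua
        have hlt : φ₂ y < φ₂ u := by
          have := (m2 y py).2
          have : φ₂ y ≠ φ₂ u := fun e => hya (i2 _ py _ haS2 e)
          omega
        exact n2 x px y py v pv u haS2 hxy huv.symm (f4 _ px _ pv hxa hva l2)
          (f4 _ pv _ py hva hya l3) hlt
      · exact n2 u pu v pv x px y py huv hxy (f4 _ pu _ px hua hxa l1) (f4 _ px _ pv hxa hva l2)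
          (f4 _ pv _ py hva hya l3)

end NT

namespace NT

def QSub (k : ℕ) (σ : List Bool) : Set (QVert k) := {x | ∃ τ h, x = Sum.inr ⟨τ, h⟩ ∧ σ <:+ τ}

theorem qbase_lt (k : ℕ) : ∀ σ : List Bool, σ.length ≤ k → ∀ τ h,
    ((qbase k σ).1 = Sum.inr ⟨τ, h⟩ → τ.length < σ.length) ∧
    ((qbase k σ).2 = Sum.inr ⟨τ, h⟩ → τ.length < σ.length) := by
  intro σ
  induction σ with
  | nil => intro _ τ h; simp [qbase]
  | cons b σ ih =>
    intro hl τ h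
    have hl' : σ.length < k := by simpa using hl
    have := ih hl'.le τ h
    constructor
    · intro e
      simp only [qbase] at e
      simp only [List.length_cons]
      cases b
      · have := this.1 (by simpa using e); omega
      · have := this.2 (by simpa using e); omega
    · intro e
      simp only [qbase, hl', dif_pos] at e
      have e' : σ = τ := by simpa using e
      simp [e']

theorem apex_adj (k : ℕ) (σ : List Bool) (h : σ.length < k) :
    (Qgraph k).Adj (Sum.inr ⟨σ, h⟩) (qbase k σ).1 ∧ (Qgraph k).Adj (Sum.inr ⟨σ, h⟩) (qbase k σ).2 := by
  have hl := qbase_lt k σ h.le σ h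
  unfold Qgraph
  simp only [SimpleGraph.fromEdgeSet_adj]
  refine ⟨⟨Or.inr ⟨σ, h, Or.inl rfl⟩, fun e => ?_⟩, ⟨Or.inr ⟨σ, h, Or.inr rfl⟩, fun e => ?_⟩⟩
  · have := hl.1 e.symm; omega
  · have := hl.2 e.symm; omega

theorem qbase_adj (k : ℕ) (σ : List Bool) (h : σ.length ≤ k) :
    (Qgraph k).Adj (qbase k σ).1 (qbase k σ).2 := by
  cases σ with
  | nil => simp [qbase, Qgraph]
  | cons b σ =>
    have hl : σ.length < k := by simpa using h
    have := apex_adj k σ hl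
    cases b
    · simpa [qbase, hl] using this.1.symm
    · simpa [qbase, hl] using this.2.symm

theorem qbase_not_sub (k : ℕ) (σ : List Bool) (h : σ.length ≤ k) :
    (qbase k σ).1 ∉ QSub k σ ∧ (qbase k σ).2 ∉ QSub k σ := by
  constructor
  · rintro ⟨τ, hτ, e, hs⟩
    have := (qbase_lt k σ h τ hτ).1 e
    have := hs.length_le
    omega
  · rintro ⟨τ, hτ, e, hs⟩
    have := (qbase_lt k σ h τ hτ).2 e
    have := hs.length_le
    omega

theorem qsub_sub (k : ℕ) (σ : List Bool) (b : Bool) : QSub k (b :: σ) ⊆ QSub k σ := by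
  rintro x ⟨τ, h, rfl, hs⟩
  exact ⟨τ, h, rfl, (List.suffix_cons b σ).trans hs⟩

theorem qsub_apex (k : ℕ) (σ : List Bool) (b : Bool) (h : σ.length < k) :
    (Sum.inr ⟨σ, h⟩ : QVert k) ∉ QSub k (b :: σ) := by
  rintro ⟨τ, h, e, hs⟩
  have e' : σ = τ := by simpa using e
  subst e'
  have := hs.length_le
  simp at this

theorem qsub_disj (k : ℕ) (σ : List Bool) (x : QVert k) (h1 : x ∈ QSub k (false :: σ))
    (h2 : x ∈ QSub k (true :: σ)) : False := by
  obtain ⟨τ, h, rfl, hs⟩ := h1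
  obtain ⟨τ', h', e, hs'⟩ := h2
  have e' : τ = τ' := by simpa using e
  subst e'
  have := List.suffix_of_suffix_length_le hs hs' (by simp)
  have := this.eq_of_length (by simp)
  simp at this

structure Mod {V : Type*} (H : SimpleGraph V) (k : ℕ) (M : Set V) (a b : V) (σ : List Bool)
    (f : V → Set (QVert k)) : Prop where
  conn : ∀ v ∈ insert a (insert b M), Conn (Qgraph k) (f v)
  disj : ∀ v w x, v ≠ w → x ∈ f v → x ∈ f w → False
  edge : ∀ v ∈ insert a (insert b M), ∀ w ∈ insert a (insert b M), H.Adj v w →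
    Edge (Qgraph k) (f v) (f w)
  ha : (qbase k σ).1 ∈ f a
  hb : (qbase k σ).2 ∈ f b
  loc : ∀ v x, x ∈ f v → (v = a ∧ x = (qbase k σ).1) ∨ (v = b ∧ x = (qbase k σ).2) ∨
    (v ∈ insert a (insert b M) ∧ x ∈ QSub k σ)

theorem mod_nil {V : Type*} (H : SimpleGraph V) (k : ℕ) (a b : V) (hab : a ≠ b) (σ : List Bool)
    (hσ : σ.length ≤ k) : ∃ f, Mod H k ∅ a b σ f := by
  classical
  have hadj := qbase_adj k σ hσ
  refine ⟨fun v => if v = a then {(qbase k σ).1} else if v = b then {(qbase k σ).2} else ∅,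
    ?_, ?_, ?_, ?_, ?_, ?_⟩
  · intro v hv
    simp only [Set.mem_insert_iff, Set.mem_empty_iff_false, or_false] at hv
    rcases hv with rfl | rfl
    · simpa using conn_singleton _ _
    · simpa [hab.symm] using conn_singleton _ _
  · intro v w x hvw
    have := hadj.ne
    by_cases h1 : v = a <;> by_cases h2 : v = b <;> by_cases h3 : w = a <;> by_cases h4 : w = b <;>
      simp [h1, h2, h3, h4] <;> grind
  · intro v hv w hw hvw
    simp only [Set.mem_insert_iff, Set.mem_empty_iff_false, or_false] at hv hw
    have := hvw.ne
    rcases hv with rfl | rfl <;> rcases hw with rfl | rfl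
    · exact absurd rfl this
    · exact ⟨(qbase k σ).1, by simp, (qbase k σ).2, by simp [hab.symm], hadj⟩
    · exact ⟨(qbase k σ).2, by simp [hab.symm], (qbase k σ).1, by simp, hadj.symm⟩
    · exact absurd rfl this
  · simp
  · simp [hab.symm]
  · intro v x hx
    by_cases h1 : v = a
    · left; simpa [h1] using hx
    · by_cases h2 : v = b
      · subst h2
        right; left; simpa [h1] using hx
      · simp [h1, h2] at hx

theorem mod_glue {V : Type*} {H : SimpleGraph V} {k : ℕ} {a b c : V} {A₁ A₂ : Set V}
    {σ : List Bool} (hσ : σ.length < k) (hab : a ≠ b) (hac : a ≠ c) (hbc : b ≠ c)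
    (ha2 : a ∉ A₂) (hb1 : b ∉ A₁) (hc1 : c ∉ A₁) (hc2 : c ∉ A₂)
    (hd : Disjoint A₁ A₂) (e12 : ¬ Edge H A₁ A₂) (e1b : ¬ Edge H A₁ {b}) (e2a : ¬ Edge H A₂ {a})
    {f₁ f₂ : V → Set (QVert k)} (h1 : Mod H k A₁ a c (false :: σ) f₁)
    (h2 : Mod H k A₂ b c (true :: σ) f₂) :
    Mod H k (insert c (A₁ ∪ A₂)) a b σ (fun v => f₁ v ∪ f₂ v) := by
  obtain ⟨c1, d1, ed1, ha1, hb1', l1⟩ := h1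
  obtain ⟨c2, d2, ed2, ha2', hb2', l2⟩ := h2
  have hadj := qbase_adj k σ hσ.le
  obtain ⟨ns1, ns2⟩ := qbase_not_sub k σ hσ.le
  have hap : (Sum.inr ⟨σ, hσ⟩ : QVert k) ∈ QSub k σ := ⟨σ, hσ, rfl, List.suffix_refl _⟩
  have nap := fun b => qsub_apex k σ b hσ
  have ss := qsub_sub k σ
  have dj := qsub_disj k σ
  simp only [qbase, hσ, dif_pos, if_true, Bool.false_eq_true, if_false] at ha1 hb1' l1 ha2' hb2' l2
  generalize (Sum.inr ⟨σ, hσ⟩ : QVert k) = p at *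
  generalize hq1 : (qbase k σ).1 = q1 at *
  generalize hq2 : (qbase k σ).2 = q2 at *
  generalize hZ : QSub k σ = Z at *
  have ss1 := ss false
  have ss2 := ss true
  have n1 := nap false
  have n2 := nap true
  clear ss nap
  generalize QSub k (false :: σ) = Z1 at *
  generalize QSub k (true :: σ) = Z2 at *
  have qn := hadj.ne
  have hdl := Set.disjoint_left.1 hd
  have m12 : ∀ v, v ∈ insert a (insert c A₁) → v ∈ insert b (insert c A₂) → v = c := by
    intro v
    simp only [Set.mem_insert_iff]
    grind
  have hcov : ∀ v ∈ insert a (insert b (insert c (A₁ ∪ A₂))),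
      v ∈ insert a (insert c A₁) ∨ v ∈ insert b (insert c A₂) := by
    intro v
    simp only [Set.mem_insert_iff, Set.mem_union]
    tauto
  have hS1 : insert a (insert c A₁) ⊆ insert a (insert b (insert c (A₁ ∪ A₂))) := by
    intro v; simp only [Set.mem_insert_iff, Set.mem_union]; tauto
  have hS2 : insert b (insert c A₂) ⊆ insert a (insert b (insert c (A₁ ∪ A₂))) := by
    intro v; simp only [Set.mem_insert_iff, Set.mem_union]; tauto
  have hedge : ∀ u ∈ insert a (insert b (insert c (A₁ ∪ A₂))),
      ∀ v ∈ insert a (insert b (insert c (A₁ ∪ A₂))), H.Adj u v →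
      (u ∈ insert a (insert c A₁) ∧ v ∈ insert a (insert c A₁)) ∨
      (u ∈ insert b (insert c A₂) ∧ v ∈ insert b (insert c A₂)) ∨
      (u = a ∧ v = b) ∨ (u = b ∧ v = a) := by
    intro u hu v hv huv
    have e1 : u ∈ A₁ → v ∉ A₂ := fun h h' => e12 ⟨u, h, v, h', huv⟩
    have e2 : v ∈ A₁ → u ∉ A₂ := fun h h' => e12 ⟨v, h, u, h', huv.symm⟩
    have e3 : u ∈ A₁ → v ≠ b := fun h h' => e1b ⟨u, h, v, h', huv⟩
    have e4 : v ∈ A₁ → u ≠ b := fun h h' => e1b ⟨v, h, u, h', huv.symm⟩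
    have e5 : u ∈ A₂ → v ≠ a := fun h h' => e2a ⟨u, h, v, h', huv⟩
    have e6 : v ∈ A₂ → u ≠ a := fun h h' => e2a ⟨v, h, u, h', huv.symm⟩
    clear c1 d1 ed1 l1 c2 d2 ed2 l2 hdl m12 hcov hS1 hS2 dj e12 e1b e2a
    simp only [Set.mem_insert_iff, Set.mem_union] at hu hv ⊢
    grind
  have haS1 : a ∈ insert a (insert c A₁) := by simp
  have hcS1 : c ∈ insert a (insert c A₁) := by simp
  have hbS2 : b ∈ insert b (insert c A₂) := by simp
  have hcS2 : c ∈ insert b (insert c A₂) := by simp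
  generalize insert a (insert c A₁) = S1 at *
  generalize insert b (insert c A₂) = S2 at *
  have o1 : ∀ v x, x ∈ f₁ v → v ∈ S1 := by
    intro v x hx
    rcases l1 v x hx with ⟨rfl, _⟩ | ⟨rfl, _⟩ | ⟨h, _⟩ <;> assumption
  have o2 : ∀ v x, x ∈ f₂ v → v ∈ S2 := by
    intro v x hx
    rcases l2 v x hx with ⟨rfl, _⟩ | ⟨rfl, _⟩ | ⟨h, _⟩ <;> assumption
  have key : ∀ v w x, v ≠ w → x ∈ f₁ v → x ∈ f₂ w → False := by
    intro v w x hvw hv hw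
    rcases l1 v x hv with ⟨rfl, rfl⟩ | ⟨rfl, rfl⟩ | ⟨h, hx⟩ <;>
    rcases l2 w _ hw with ⟨rfl, e⟩ | ⟨rfl, e⟩ | ⟨h', hx'⟩
    · exact qn e
    · exact ns1 (e ▸ hap)
    · exact ns1 (ss2 hx')
    · exact ns2 (e ▸ hap)
    · exact hvw rfl
    · exact n2 hx'
    · exact ns2 (e ▸ ss1 hx)
    · exact n1 (e ▸ hx)
    · exact dj x hx hx'
  refine ⟨?_, ?_, ?_, ?_, ?_, ?_⟩
  · intro v hv
    by_cases hvc : v = c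
    · subst hvc
      exact (c1 v hcS1).union_inter (c2 v hcS2) ⟨p, hb1', hb2'⟩
    · rcases hcov v hv with h | h
      · have : f₂ v = ∅ := by
          ext x; simp only [Set.mem_empty_iff_false, iff_false]
          exact fun hx => hvc (m12 v h (o2 v x hx))
        simpa [this] using c1 v h
      · have : f₁ v = ∅ := by
          ext x; simp only [Set.mem_empty_iff_false, iff_false]
          exact fun hx => hvc (m12 v (o1 v x hx) h)
        simpa [this] using c2 v h
  · rintro v w x hvw (hv | hv) (hw | hw)
    · exact d1 v w x hvw hv hw
    · exact key v w x hvw hv hw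
    · exact key w v x hvw.symm hw hv
    · exact d2 v w x hvw hv hw
  · intro v hv w hw hvw
    rcases hedge v hv w hw hvw with ⟨h, h'⟩ | ⟨h, h'⟩ | ⟨rfl, rfl⟩ | ⟨rfl, rfl⟩
    · exact (ed1 v h w h' hvw).mono Set.subset_union_left Set.subset_union_left
    · exact (ed2 v h w h' hvw).mono Set.subset_union_right Set.subset_union_right
    · exact ⟨q1, Or.inl ha1, q2, Or.inr ha2', hadj⟩
    · exact ⟨q2, Or.inr ha2', q1, Or.inl ha1, hadj.symm⟩
  · rw [hq1]; exact Or.inl ha1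
  · rw [hq2]; exact Or.inr ha2'
  · rw [hq1, hq2, hZ]
    clear hq1 hq2 hZ
    rintro v x (hx | hx)
    · rcases l1 v x hx with ⟨rfl, rfl⟩ | ⟨rfl, rfl⟩ | ⟨h, hx⟩
      · left; exact ⟨rfl, rfl⟩
      · right; right; exact ⟨hS1 hcS1, hap⟩
      · right; right; exact ⟨hS1 h, ss1 hx⟩
    · rcases l2 v x hx with ⟨rfl, rfl⟩ | ⟨rfl, rfl⟩ | ⟨h, hx⟩
      · right; left; exact ⟨rfl, rfl⟩
      · right; right; exact ⟨hS1 hcS1, hap⟩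
      · right; right; exact ⟨hS2 h, ss2 hx⟩

theorem Dec.mod {V : Type*} [Finite V] {H : SimpleGraph V} {M : Set V} {a b : V}
    (h : Dec H M a b) (k : ℕ) : ∀ σ : List Bool, M.ncard + σ.length ≤ k →
      (∃ f, Mod H k M a b σ f) ∧ (∃ f, Mod H k M b a σ f) := by
  induction h with
  | nil a b h =>
    intro σ hσ
    have hσ : σ.length ≤ k := by omega
    exact ⟨mod_nil H k a b h σ hσ, mod_nil H k b a h.symm σ hσ⟩
  | node a b c A₁ A₂ hab hac hbc ha1 ha2 hb1 hb2 hc1 hc2 hd e12 e1b e2a h1 h2 ih1 ih2 =>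
    intro σ hσ
    have hn : (insert c (A₁ ∪ A₂)).ncard = A₁.ncard + A₂.ncard + 1 := by
      rw [Set.ncard_insert_of_notMem (by simp [hc1, hc2]) (Set.toFinite _),
        Set.ncard_union_eq hd (Set.toFinite _) (Set.toFinite _)]
    rw [hn] at hσ
    have q1 := fun b => ih1 (b :: σ) (by simp only [List.length_cons]; omega)
    have q2 := fun b => ih2 (b :: σ) (by simp only [List.length_cons]; omega)
    have hl : σ.length < k := by omega
    constructor
    · obtain ⟨f₁, hf₁⟩ := (q1 false).1
      obtain ⟨f₂, hf₂⟩ := (q2 true).2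
      exact ⟨_, mod_glue hl hab hac hbc ha2 hb1 hc1 hc2 hd e12 e1b e2a hf₁ hf₂⟩
    · obtain ⟨f₁, hf₁⟩ := (q1 true).1
      obtain ⟨f₂, hf₂⟩ := (q2 false).2
      rw [Set.union_comm]
      exact ⟨_, mod_glue hl hab.symm hbc hac hb1 ha2 hc2 hc1 hd.symm (fun h => e12 h.symm) e2a e1b
        hf₂ hf₁⟩

end NT

namespace NT

theorem two_side {V : Type*} {G : SimpleGraph V} {X Y M : Set V} {a b : V} (hT : Two G M a b)
    (hX : X ⊆ M) (hM : ∀ v ∈ M, v ∈ X ∨ v ∈ Y) (hXY : ¬ Edge G X Y) : Two G X a b := by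
  intro K hK hne s hs
  obtain ⟨u, hu, v, h1, h2, h3, h4⟩ := hT K (hK.trans hX) hne s hs
  refine ⟨u, hu, v, h1, ?_, h3, h4⟩
  rcases h2 with h2 | h2
  · rcases hM v h2 with h | h
    · exact Or.inl h
    · exact absurd ⟨u, hK hu, v, h, h4⟩ hXY
  · exact Or.inr h2

theorem link {V : Type*} [Finite V] {G : SimpleGraph V} {Y : Set V} {a b : V} (hab : a ≠ b)
    (hT : Two G Y a b) (haY : a ∉ Y) (hbY : b ∉ Y) (hne : Y.Nonempty) :
    ∃ E ⊆ Y, Conn G E ∧ Edge G E {a} ∧ Edge G E {b} := by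
  obtain ⟨y, hy⟩ := hne
  obtain ⟨E, hE, hyE, cE, hcl⟩ := exists_comp G Y y hy
  refine ⟨E, hE, cE, ?_, ?_⟩
  · obtain ⟨u, hu, v, h1, h2, h3, h4⟩ := hT E hE ⟨y, hyE⟩ b (fun h => hbY (hE h))
    rcases h2 with h2 | h2 | h2
    · exact absurd (hcl u hu v h2 h4) h1
    · exact ⟨u, hu, v, h2, h4⟩
    · exact absurd h2 h3
  · obtain ⟨u, hu, v, h1, h2, h3, h4⟩ := hT E hE ⟨y, hyE⟩ a (fun h => haY (hE h))
    rcases h2 with h2 | h2 | h2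
    · exact absurd (hcl u hu v h2 h4) h1
    · exact absurd h2 h3
    · exact ⟨u, hu, v, h2, h4⟩

theorem side_dec {V : Type*} [Finite V] {G : SimpleGraph V} {X Y M : Set V} {a b : V} (hab : a ≠ b)
    (h23 : ¬ IsMinor K23 G)
    (hT : Two G M a b) (haM : a ∉ M) (hbM : b ∉ M)
    (hX : X ⊆ M) (hY : Y ⊆ M) (hM : ∀ v ∈ M, v ∈ X ∨ v ∈ Y) (hd : Disjoint X Y)
    (hXY : ¬ Edge G X Y) (hne : Y.Nonempty) : Dec G X a b := by
  have hTX := two_side hT hX hM hXY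
  have hTY := two_side hT hY (fun v hv => (hM v hv).symm) (fun h => hXY h.symm)
  obtain ⟨E, hE, cE, ea, eb⟩ := link hab hTY (fun h => haM (hY h)) (fun h => hbM (hY h)) hne
  refine dec_of _ X a b le_rfl hab (fun h => haM (hX h)) (fun h => hbM (hX h)) hTX ?_
  intro A B C D hA hB hC hD cA cB cC cD dAB dAC dAD dBC dBD dCD ha hb e1 e2 e3 e4
  have dE : ∀ Z ⊆ insert a (insert b X), Disjoint Z E := by
    intro Z hZ
    rw [Set.disjoint_left]
    intro z hz hzE
    rcases hZ hz with rfl | rfl | h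
    · exact haM (hY (hE hzE))
    · exact hbM (hY (hE hzE))
    · exact Set.disjoint_left.1 hd h (hE hzE)
  exact h23 (k23_of cA cB cC cD cE dAB dAC dAD (dE A hA) dBC dBD (dE B hB) dCD (dE C hC) (dE D hD)
    e1.symm e3.symm (ea.mono le_rfl (by simpa using ha)).symm e2.symm e4.symm
    (eb.mono le_rfl (by simpa using hb)).symm)

/-- contradiction from a side without common neighbour -/
theorem add_contra {V : Type*} {H : SimpleGraph V} {P Q : Set V} {a b : V}
    (hMax : ∀ u v : V, u ≠ v → ¬ H.Adj u v →
      ¬ Outerplanar (H ⊔ SimpleGraph.fromEdgeSet {s(u, v)}))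
    (hP : Dec H P a b) (hQ : Dec H Q a b) (hd : Disjoint P Q) (haP : a ∉ P) (hbP : b ∉ P)
    (haQ : a ∉ Q) (hbQ : b ∉ Q) (hcov : ∀ v, v = a ∨ v = b ∨ v ∈ P ∨ v ∈ Q) (hPQ : ¬ Edge H P Q)
    (hne : Q.Nonempty) (hno : ∀ c ∈ Q, ¬ (H.Adj a c ∧ H.Adj b c)) : False := by
  obtain ⟨c, hc, hca, hcb, d1, d2⟩ := hQ.add hne
  have hcP : c ∉ P := fun h => Set.disjoint_left.1 hd h hc
  have main : ∀ z, z ∉ P → z ∉ Q → z ≠ c →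
      Dec (H ⊔ SimpleGraph.fromEdgeSet {s(z, c)}) Q a b → H.Adj z c := by
    intro z hzP hzQ hzc hD
    by_contra hadj
    refine hMax z c hzc hadj ?_
    have hsub : ∀ u ∈ P, ∀ v, (H ⊔ SimpleGraph.fromEdgeSet {s(z, c)}).Adj u v → H.Adj u v := by
      intro u hu v huv
      rw [SimpleGraph.sup_adj, SimpleGraph.fromEdgeSet_adj] at huv
      rcases huv with h | ⟨h, _⟩
      · exact h
      · rw [Set.mem_singleton_iff, Sym2.eq_iff] at h
        rcases h with ⟨rfl, rfl⟩ | ⟨rfl, rfl⟩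
        · exact absurd hu hzP
        · exact absurd hu hcP
    refine two_sided (hP.mono (fun u hu v _ h => hsub u hu v h)) hD.symm hd haP hbP haQ hbQ hcov ?_
    rintro ⟨u, hu, v, hv, h⟩
    exact hPQ ⟨u, hu, v, hv, hsub u hu v h⟩
  exact hno c hc ⟨main a haP haQ hca.symm d1, main b hbP hbQ hcb.symm d2⟩

theorem two_of_conn {V : Type*} [Fintype V] {H : SimpleGraph V} (h2 : IsKConnected 2 H) {a b : V}
    (hab : a ≠ b) : Two H {v | v ≠ a ∧ v ≠ b} a b := by
  intro K hK hne s hs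
  have hc := conn_of_induce (h2.2 {s} (by simp))
  obtain ⟨x, hx⟩ := hne
  have haK : a ∉ K := fun h => (hK h).1 rfl
  have hbK : b ∉ K := fun h => (hK h).2 rfl
  have hsx : x ≠ s := by rintro rfl; exact hs hx
  have : ∃ y, y ≠ s ∧ y ∉ K := by
    by_cases h : a = s
    · exact ⟨b, fun e => hab (h.trans e.symm), hbK⟩
    · exact ⟨a, h, haK⟩
  obtain ⟨y, hys, hyK⟩ := this
  obtain ⟨u, hu, v, hv, huK, hvK, huv⟩ := hc.2 K ⟨x, by simpa using hsx, hx⟩ ⟨y, by simpa using hys, hyK⟩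
  refine ⟨u, huK, v, hvK, ?_, by simpa using hv, huv⟩
  show (v ≠ a ∧ v ≠ b) ∨ v = a ∨ v = b
  tauto

theorem exists_dec {V : Type*} [Fintype V] (H : SimpleGraph V)
    (h2 : IsKConnected 2 H) (hOP : Outerplanar H)
    (hMax : ∀ u v : V, u ≠ v → ¬ H.Adj u v →
      ¬ Outerplanar (H ⊔ SimpleGraph.fromEdgeSet {s(u, v)}))
    (a b : V) (hab : H.Adj a b) (hM : ({v | v ≠ a ∧ v ≠ b} : Set V).Nonempty)
    (hout : ∃! c : V, H.Adj a c ∧ H.Adj b c) :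
    Dec H {v | v ≠ a ∧ v ≠ b} a b := by
  have hT := two_of_conn h2 hab.ne
  have haM : a ∉ ({v | v ≠ a ∧ v ≠ b} : Set V) := fun h => h.1 rfl
  have hbM : b ∉ ({v | v ≠ a ∧ v ≠ b} : Set V) := fun h => h.2 rfl
  by_cases hc : Conn H {v | v ≠ a ∧ v ≠ b}
  · refine dec_of _ _ a b le_rfl hab.ne haM hbM hT ?_
    intro A B C D hA hB hC hD cA cB cC cD dAB dAC dAD dBC dBD dCD ha hb e1 e2 e3 e4
    exact no_bad hab hOP.1 hOP.2 hc ⟨cA, cB, cC, cD, dAB, dAC, dAD, dBC, dBD, dCD, ha, hb, e1, e2, e3, e4⟩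
  · exfalso
    unfold Conn at hc
    push Not at hc
    obtain ⟨U, ⟨x, hx, hxU⟩, ⟨y, hy, hyU⟩, hU⟩ := hc hM
    have hMc : ∀ v, v = a ∨ v = b ∨ v ∈ ({v | v ≠ a ∧ v ≠ b} : Set V) := by
      intro v
      show v = a ∨ v = b ∨ (v ≠ a ∧ v ≠ b)
      tauto
    generalize ({v | v ≠ a ∧ v ≠ b} : Set V) = M at *
    have hd : Disjoint (M ∩ U) (M \ U) := by
      rw [Set.disjoint_left]; exact fun v hv hv' => hv'.2 hv.2
    have hPM : M ∩ U ⊆ M := Set.inter_subset_left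
    have hQM : M \ U ⊆ M := fun v hv => hv.1
    have hPQ : ¬ Edge H (M ∩ U) (M \ U) := by
      rintro ⟨u, hu, v, hv, h⟩
      exact hU u hu.1 v hv.1 hu.2 hv.2 h
    have hcv : ∀ v ∈ M, v ∈ M ∩ U ∨ v ∈ M \ U := by
      intro v hv
      by_cases h : v ∈ U
      · exact Or.inl ⟨hv, h⟩
      · exact Or.inr ⟨hv, h⟩
    have nP : (M ∩ U).Nonempty := ⟨x, hx, hxU⟩
    have nQ : (M \ U).Nonempty := ⟨y, hy, hyU⟩
    generalize M ∩ U = P at *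
    generalize M \ U = Q at *
    have dP := side_dec hab.ne hOP.2 hT haM hbM hPM hQM hcv hd hPQ nQ
    have dQ := side_dec hab.ne hOP.2 hT haM hbM hQM hPM (fun v hv => (hcv v hv).symm) hd.symm
      (fun h => hPQ h.symm) nP
    have haP : a ∉ P := fun h => haM (hPM h)
    have hbP : b ∉ P := fun h => hbM (hPM h)
    have haQ : a ∉ Q := fun h => haM (hQM h)
    have hbQ : b ∉ Q := fun h => hbM (hQM h)
    have hcov : ∀ v, v = a ∨ v = b ∨ v ∈ P ∨ v ∈ Q := by
      intro v
      have h1 := hMc v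
      have h2 := hcv v
      tauto
    obtain ⟨c, hc1, hc2⟩ := hout
    by_cases hcQ : c ∈ Q
    · refine add_contra hMax dQ dP hd.symm haQ hbQ haP hbP ?_ (fun h => hPQ h.symm) nP ?_
      · intro v
        have h1 := hcov v
        tauto
      · intro c' hc' h
        have := hc2 c' h
        subst this
        exact Set.disjoint_left.1 hd hc' hcQ
    · refine add_contra hMax dP dQ hd haP hbP haQ hbQ hcov hPQ nQ ?_
      intro c' hc' h
      have := hc2 c' h
      subst this
      exact hcQ hc'

end NT

/-- Lemma 2.3. A 2-connected outerplanar near-triangulation `H` with `k`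
triangles (formalized combinatorially: `H` is 2-connected, edge-maximal outerplanar, and has
`k + 2` vertices, an edge being incident with the unbounded face iff its ends have exactly
one common neighbour) is isomorphic to a minor of `𝒬_k`; moreover for every edge `a₁a₂`
incident with the unbounded face, the minor model can be chosen so that the ends `w₁, w₂`
of the base edge of `𝒬_k` belong to the nodes of `a₁` and `a₂` respectively. -/
theorem near_triangulation_minor_of_Qk {V : Type} [Fintype V] (H : SimpleGraph V) (k : ℕ)
    (h2 : IsKConnected 2 H) (hOP : Outerplanar H)
    (hMax : ∀ u v : V, u ≠ v → ¬ H.Adj u v →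
      ¬ Outerplanar (H ⊔ SimpleGraph.fromEdgeSet {s(u, v)}))
    (hcard : k + 2 = Fintype.card V) (hk : 0 < k)
    (a₁ a₂ : V) (ha : H.Adj a₁ a₂) (hout : ∃! c : V, H.Adj a₁ c ∧ H.Adj a₂ c) :
    ∃ f : V → Set (QVert k), IsMinorModel H (Qgraph k) f ∧
      (Sum.inl false : QVert k) ∈ f a₁ ∧ (Sum.inl true : QVert k) ∈ f a₂ := by
  classical
  have hnc : ({v | v ≠ a₁ ∧ v ≠ a₂} : Set V).ncard = k := by
    have e : ({v | v ≠ a₁ ∧ v ≠ a₂} : Set V) = ({a₁, a₂} : Set V)ᶜ := by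
      ext v; simp
    have h1 := Set.ncard_add_ncard_compl ({a₁, a₂} : Set V)
    rw [Set.ncard_pair ha.ne, Nat.card_eq_fintype_card, ← e] at h1
    omega
  have hne : ({v | v ≠ a₁ ∧ v ≠ a₂} : Set V).Nonempty := by
    rw [← Set.ncard_pos (Set.toFinite _)]; omega
  have hD := NT.exists_dec H h2 hOP hMax a₁ a₂ ha hne hout
  obtain ⟨f, hf⟩ := (hD.mod k [] (by simp [hnc])).1
  have hall : ∀ v, v ∈ insert a₁ (insert a₂ ({v | v ≠ a₁ ∧ v ≠ a₂} : Set V)) := by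
    intro v
    simp only [Set.mem_insert_iff, Set.mem_setOf_eq]
    tauto
  refine ⟨f, ⟨fun v => (hf.conn v (hall v)).1, fun v => (hf.conn v (hall v)).induce,
    fun v w hvw => Set.disjoint_left.2 fun x h h' => hf.disj v w x hvw h h',
    fun v w hvw => hf.edge v (hall v) w (hall w) hvw⟩, ?_, ?_⟩
  · simpa [qbase] using hf.ha
  · simpa [qbase] using hf.hb
end

section
/- Let H be a graph that has no minor isomorphic to K_4 or K_{2,3}. Then there exists a positive integer k such that H is isomorphic to a minor of 𝒬_k. -/
/-!
Common definitions: minors, widths, connectivity, the specific graphs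
`K4`, `K23`, `C32`, `graphA`, the binary trees `CT_h`, the graphs `𝒫_k`, `𝒬_k`,
the trees `T_h`, homeomorphic embeddings, cascades, and related notions,
following Dang--Thomas, "Minors of two-connected graphs of large path-width".
-/

open SimpleGraph

abbrev Cn {V : Type*} (G : SimpleGraph V) (T : Set V) : Prop := (G.induce T).Connected

theorem Cn.single {V : Type*} (G : SimpleGraph V) (a : V) : Cn G {a} := by
  unfold Cn
  rw [induce_singleton_eq_top]
  exact connected_top

theorem Cn.ne {V : Type*} {G : SimpleGraph V} {T : Set V} (h : Cn G T) : T.Nonempty := by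
  obtain ⟨x⟩ := h.nonempty
  exact ⟨x.1, x.2⟩

theorem Cn.union {V : Type*} {G : SimpleGraph V} {S T : Set V} (hS : Cn G S) (hT : Cn G T)
    {a : V} (ha : a ∈ S) (ha' : a ∈ T) : Cn G (S ∪ T) :=
  induce_union_connected hS.preconnected hT.preconnected ⟨a, ha, ha'⟩

theorem Cn.adj {V : Type*} {G : SimpleGraph V} {S T : Set V} (hS : Cn G S) (hT : Cn G T)
    {a b : V} (ha : a ∈ S) (hb : b ∈ T) (hab : G.Adj a b) : Cn G (S ∪ T) :=
  connected_induce_union hS.preconnected hT.preconnected ha hb hab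

theorem Cn.image {V W : Type*} {G : SimpleGraph V} {G' : SimpleGraph W} {S : Set V} (hS : Cn G S)
    (φ : V → W) (hφ : ∀ a ∈ S, ∀ b ∈ S, G.Adj a b → G'.Adj (φ a) (φ b)) : Cn G' (φ '' S) := by
  refine Connected.map (G := G.induce S) ⟨fun x => ⟨φ x.1, x.1, x.2, rfl⟩, ?_⟩ ?_ hS
  · intro a b hab
    exact hφ _ a.2 _ b.2 hab
  · rintro ⟨_, x, hx, rfl⟩
    exact ⟨⟨x, hx⟩, rfl⟩

theorem Cn.of_adj {V : Type*} {G G' : SimpleGraph V} {S : Set V} (hS : Cn G S)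
    (hφ : ∀ a ∈ S, ∀ b ∈ S, G.Adj a b → G'.Adj a b) : Cn G' S := by
  have := hS.image (G' := G') id hφ
  simpa using this

theorem bdry {V : Type*} {G : SimpleGraph V} {T : Set V} (hT : Cn G T) {a b : V} (X : Set V)
    (ha : a ∈ T) (haX : a ∉ X) (hb : b ∈ T) (hbX : b ∈ X) :
    ∃ D : Set V, D ⊆ T ∧ (∀ d ∈ D, d ∉ X) ∧ Cn G D ∧ a ∈ D ∧
      ∃ d ∈ D, ∃ z ∈ T, z ∈ X ∧ G.Adj d z := by
  obtain ⟨p⟩ := hT.preconnected ⟨a, ha⟩ ⟨b, hb⟩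
  have key : ∀ (x y : T) (p : (G.induce T).Walk x y), x.1 ∉ X → y.1 ∈ X →
      ∃ D : Set V, D ⊆ T ∧ (∀ d ∈ D, d ∉ X) ∧ Cn G D ∧ x.1 ∈ D ∧
      ∃ d ∈ D, ∃ z ∈ T, z ∈ X ∧ G.Adj d z := by
    intro x y p
    induction p with
    | nil => intro h1 h2; exact absurd h2 h1
    | @cons x c y h p ih =>
      intro h1 h2
      have hadj : G.Adj x.1 c.1 := h
      by_cases hc : c.1 ∈ X
      · exact ⟨{x.1}, by simp, by simpa using h1, Cn.single _ _, rfl, x.1, rfl, c.1, c.2, hc, hadj⟩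
      · obtain ⟨D, hD, hDX, hDc, hcD, d, hd, z, hz, hzX, hdz⟩ := ih hc h2
        refine ⟨{x.1} ∪ D, ?_, ?_, (Cn.single _ _).adj hDc rfl hcD hadj, Or.inl rfl, d, Or.inr hd,
          z, hz, hzX, hdz⟩
        · rintro w (rfl | hw)
          · exact x.2
          · exact hD hw
        · rintro w (rfl | hw)
          · exact h1
          · exact hDX w hw
  exact key _ _ p haX hbX

theorem comp_exists {V : Type*} [Finite V] (G : SimpleGraph V) (S : Set V) {y : V} (hy : y ∈ S) :
    ∃ C : Set V, C ⊆ S ∧ y ∈ C ∧ Cn G C ∧ ∀ c ∈ C, ∀ s ∈ S, G.Adj c s → s ∈ C := by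
  obtain ⟨C, ⟨h1, h2, h3⟩, hmax⟩ := Set.Finite.exists_maximal
    (Set.toFinite {C : Set V | C ⊆ S ∧ y ∈ C ∧ Cn G C}) ⟨{y}, by simpa, rfl, Cn.single _ _⟩
  refine ⟨C, h1, h2, h3, fun c hc s hs hcs => ?_⟩
  have := hmax (y := C ∪ {s}) ⟨?_, Or.inl h2, h3.adj (Cn.single _ s) hc rfl hcs⟩
    Set.subset_union_left
  · exact this (Or.inr rfl)
  · rintro w (hw | rfl)
    · exact h1 hw
    · exact hs

theorem menger2 {V : Type*} [Finite V] (G : SimpleGraph V) (A : Set V) : ∀ (n : ℕ) (S B : Set V),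
    S.ncard = n →
    (∀ x : V, ∃ T : Set V, T ⊆ S ∧ x ∉ T ∧ Cn G T ∧ (∃ a ∈ T, a ∈ A) ∧ ∃ b ∈ T, b ∈ B) →
    Nonempty V →
    ∃ T₁ T₂ : Set V, T₁ ⊆ S ∧ T₂ ⊆ S ∧ Cn G T₁ ∧ Cn G T₂ ∧ (∀ w ∈ T₁, w ∉ T₂) ∧
      (∃ a ∈ T₁, a ∈ A) ∧ (∃ b ∈ T₁, b ∈ B) ∧ (∃ a ∈ T₂, a ∈ A) ∧ (∃ b ∈ T₂, b ∈ B) := by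
  intro n
  induction n using Nat.strong_induction_on with
  | _ n ih =>
  intro S B hn hyp hne
  obtain ⟨v0⟩ := hne
  obtain ⟨T0, hT0S, -, hT0c, ⟨a, haT, haA⟩, y, hyT, hyB⟩ := hyp v0
  have hyS := hT0S hyT
  obtain ⟨T, hTS, hyTn, hTc, ⟨a', ha'T, ha'A⟩, t, htT, htB⟩ := hyp y
  by_cases hyA : y ∈ A
  · exact ⟨{y}, T, by simpa, hTS, Cn.single _ _, hTc, by rintro w rfl; exact hyTn,
      ⟨y, rfl, hyA⟩, ⟨y, rfl, hyB⟩, ⟨a', ha'T, ha'A⟩, ⟨t, htT, htB⟩⟩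
  have hay : a ≠ y := by rintro rfl; exact hyA haA
  by_cases h1 : ∀ x : V, ∃ T : Set V, T ⊆ S \ {y} ∧ x ∉ T ∧ Cn G T ∧ (∃ a ∈ T, a ∈ A) ∧
      ∃ b ∈ T, b ∈ {b | G.Adj b y}
  · obtain ⟨A1, A2, h1S, h2S, h1c, h2c, hd, ⟨a1, ha1, ha1A⟩, ⟨b1, hb1, hb1y⟩, ⟨a2, ha2, ha2A⟩,
      ⟨b2, hb2, hb2y⟩⟩ := ih _ (hn ▸ Set.ncard_sdiff_singleton_lt_of_mem hyS (Set.toFinite S)) _ _ rfl h1 ⟨v0⟩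
    have e1 : Cn G (A1 ∪ {y}) := h1c.adj (Cn.single _ y) hb1 rfl hb1y
    have e2 : Cn G (A2 ∪ {y}) := h2c.adj (Cn.single _ y) hb2 rfl hb2y
    have s1 : A1 ⊆ S := fun w hw => (h1S hw).1
    have s2 : A2 ⊆ S := fun w hw => (h2S hw).1
    have y1 : y ∉ A1 := fun h => (h1S h).2 rfl
    have y2 : y ∉ A2 := fun h => (h2S h).2 rfl
    -- finishing when a connected piece D meets B
    have fin : ∀ D : Set V, D ⊆ S → y ∉ D → Cn G D → (∀ d ∈ D, d ∉ A2) → a1 ∈ D → t ∈ D →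
      ∃ T₁ T₂ : Set V, T₁ ⊆ S ∧ T₂ ⊆ S ∧ Cn G T₁ ∧ Cn G T₂ ∧ (∀ w ∈ T₁, w ∉ T₂) ∧
      (∃ a ∈ T₁, a ∈ A) ∧ (∃ b ∈ T₁, b ∈ B) ∧ (∃ a ∈ T₂, a ∈ A) ∧ (∃ b ∈ T₂, b ∈ B) := by
      intro D hDS hyD hDc hD2 hDa hDt
      refine ⟨D, A2 ∪ {y}, hDS, Set.union_subset s2 (by simpa), hDc, e2, ?_, ⟨a1, hDa, ha1A⟩,
        ⟨t, hDt, htB⟩, ⟨a2, Or.inl ha2, ha2A⟩, ⟨y, Or.inr rfl, hyB⟩⟩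
      rintro w hw (h | rfl)
      · exact hD2 w hw h
      · exact hyD hw
    have fin' : ∀ D : Set V, D ⊆ S → y ∉ D → Cn G D → (∀ d ∈ D, d ∉ A1) → a2 ∈ D → t ∈ D →
      ∃ T₁ T₂ : Set V, T₁ ⊆ S ∧ T₂ ⊆ S ∧ Cn G T₁ ∧ Cn G T₂ ∧ (∀ w ∈ T₁, w ∉ T₂) ∧
      (∃ a ∈ T₁, a ∈ A) ∧ (∃ b ∈ T₁, b ∈ B) ∧ (∃ a ∈ T₂, a ∈ A) ∧ (∃ b ∈ T₂, b ∈ B) := by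
      intro D hDS hyD hDc hD2 hDa hDt
      refine ⟨D, A1 ∪ {y}, hDS, Set.union_subset s1 (by simpa), hDc, e1, ?_, ⟨a2, hDa, ha2A⟩,
        ⟨t, hDt, htB⟩, ⟨a1, Or.inl ha1, ha1A⟩, ⟨y, Or.inr rfl, hyB⟩⟩
      rintro w hw (h | rfl)
      · exact hD2 w hw h
      · exact hyD hw
    by_cases ht1 : t ∈ A1
    · exact fin A1 s1 y1 h1c hd ha1 ht1
    by_cases ht2 : t ∈ A2
    · exact fin' A2 s2 y2 h2c (fun d h h' => hd d h' h) ha2 ht2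
    by_cases hdis : ∃ z ∈ T, z ∈ A1 ∪ A2
    · obtain ⟨z, hzT, hzX⟩ := hdis
      obtain ⟨D, hDT, hDX, hDc, htD, d, hdD, z', hz'T, hz'X, hdz⟩ :=
        bdry hTc (A1 ∪ A2) htT (by rintro (h | h) <;> contradiction) hzT hzX
      rcases hz'X with h | h
      · refine fin (A1 ∪ D) (Set.union_subset s1 (hDT.trans hTS)) ?_ (h1c.adj hDc h hdD hdz.symm)
          ?_ (Or.inl ha1) (Or.inr htD)
        · rintro (h | h)
          · exact y1 h
          · exact hyTn (hDT h)
        · rintro w (hw | hw) hw2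
          · exact hd w hw hw2
          · exact hDX w hw (Or.inr hw2)
      · refine fin' (A2 ∪ D) (Set.union_subset s2 (hDT.trans hTS)) ?_ (h2c.adj hDc h hdD hdz.symm)
          ?_ (Or.inl ha2) (Or.inr htD)
        · rintro (h | h)
          · exact y2 h
          · exact hyTn (hDT h)
        · rintro w (hw | hw) hw2
          · exact hd w hw2 hw
          · exact hDX w hw (Or.inl hw2)
    · push Not at hdis
      refine ⟨T, A1 ∪ {y}, hTS, Set.union_subset s1 (by simpa), hTc, e1, ?_, ⟨a', ha'T, ha'A⟩,
        ⟨t, htT, htB⟩, ⟨a1, Or.inl ha1, ha1A⟩, ⟨y, Or.inr rfl, hyB⟩⟩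
      rintro w hw (h | rfl)
      · exact hdis w hw (Or.inl h)
      · exact hyTn hw
  · push Not at h1
    obtain ⟨x, hx⟩ := h1
    have hx' : ∀ T : Set V, T ⊆ S → x ∉ T ∨ x = y → Cn G T → y ∈ T → ∀ a ∈ T, a ∈ A → False := by
      intro T hTS hxT hTc hyT a haT haA
      have hay : a ≠ y := by rintro rfl; exact hyA haA
      obtain ⟨D, hDT, hDX, hDc, haD, d, hdD, z, hzT, hzX, hdz⟩ :=
        bdry hTc {y} haT hay hyT rfl
      obtain rfl : z = y := hzX
      refine hx D (fun w hw => ⟨hTS (hDT hw), hDX w hw⟩) ?_ hDc ⟨a, haD, haA⟩ d hdD hdz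
      rcases hxT with h | rfl
      · exact fun h' => h (hDT h')
      · exact fun h' => hDX _ h' rfl
    have hxy : y ≠ x := by
      rintro rfl
      exact hx' T0 hT0S (Or.inr rfl) hT0c hyT a haT haA
    obtain ⟨K, hKS, hyK, hKc, hKcl⟩ := comp_exists G (S \ {x}) (y := y) ⟨hyS, hxy⟩
    have hKA : ∀ a ∈ K, a ∉ A := fun a h1 h2 =>
      hx' K (fun w hw => (hKS hw).1) (Or.inl fun h => (hKS h).2 rfl) hKc hyK a h1 h2
    have hbd : ∀ T : Set V, T ⊆ S → Cn G T → ∀ a ∈ T, a ∈ A → (∃ b ∈ T, b ∈ K) →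
        ∃ D : Set V, D ⊆ T ∧ D ⊆ S \ K ∧ Cn G D ∧ a ∈ D ∧ x ∈ D ∧ ∃ z ∈ K, G.Adj x z := by
      intro T hTS hTc a haT haA ⟨b, hbT, hbK⟩
      obtain ⟨D, hDT, hDX, hDc, haD, d, hdD, z, hzT, hzX, hdz⟩ :=
        bdry hTc K haT (fun h => hKA a h haA) hbT hbK
      have hdx : d = x := by
        by_contra hne
        exact hDX d hdD (hKcl z hzX d ⟨hTS (hDT hdD), hne⟩ hdz.symm)
      subst hdx
      exact ⟨D, hDT, fun w hw => ⟨hTS (hDT hw), hDX w hw⟩, hDc, haD, hdD, z, hzX, hdz⟩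
    obtain ⟨-, -, -, -, -, -, z, hzK, hxz⟩ := hbd T0 hT0S hT0c a haT haA ⟨y, hyT, hyK⟩
    have hcard : (S \ K).ncard < n := by
      rw [← hn]
      refine Set.ncard_lt_ncard ⟨Set.sdiff_subset, fun h => ?_⟩ (Set.toFinite S)
      exact (h hyS).2 hyK
    obtain ⟨T1, T2, h1S, h2S, h1c, h2c, hd, hA1, ⟨b1, hb1, hb1B⟩, hA2, ⟨b2, hb2, hb2B⟩⟩ :=
      ih _ hcard (S \ K) ((B \ K) ∪ {x}) rfl (by
        intro z
        obtain ⟨T, hTS, hzT, hTc, ⟨a, haT, haA⟩, b, hbT, hbB⟩ := hyp z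
        by_cases hTK : ∃ b ∈ T, b ∈ K
        · obtain ⟨D, hDT, hDS, hDc, haD, hxD, -⟩ := hbd T hTS hTc a haT haA hTK
          exact ⟨D, hDS, fun h => hzT (hDT h), hDc, ⟨a, haD, haA⟩, x, hxD, Or.inr rfl⟩
        · push Not at hTK
          exact ⟨T, fun w hw => ⟨hTS hw, hTK w hw⟩, hzT, hTc, ⟨a, haT, haA⟩, b, hbT,
            Or.inl ⟨hbB, hTK b hbT⟩⟩) ⟨v0⟩
    have up : ∀ T : Set V, T ⊆ S \ K → Cn G T → (∃ a ∈ T, a ∈ A) → x ∈ T → 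
        T ∪ K ⊆ S ∧ Cn G (T ∪ K) ∧ (∃ a ∈ T ∪ K, a ∈ A) ∧ (∃ b ∈ T ∪ K, b ∈ B) := by
      rintro T hTS hTc ⟨a, ha, haA⟩ hxT
      exact ⟨Set.union_subset (fun w hw => (hTS hw).1) (fun w hw => (hKS hw).1),
        hTc.adj hKc hxT hzK hxz, ⟨a, Or.inl ha, haA⟩, y, Or.inr hyK, hyB⟩
    have dn : ∀ T : Set V, x ∉ T → (∃ b ∈ T, b ∈ (B \ K) ∪ {x}) → ∃ b ∈ T, b ∈ B := by
      rintro T hxT ⟨b, hb, (hbB | rfl)⟩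
      · exact ⟨b, hb, hbB.1⟩
      · exact absurd hb hxT
    by_cases hx1 : x ∈ T1
    · obtain ⟨u1, u2, u3, u4⟩ := up T1 h1S h1c hA1 hx1
      refine ⟨T1 ∪ K, T2, u1, fun w hw => (h2S hw).1, u2, h2c, ?_, u3, u4, hA2,
        dn T2 (hd x hx1) ⟨b2, hb2, hb2B⟩⟩
      rintro w (hw | hw) hw2
      · exact hd w hw hw2
      · exact (h2S hw2).2 hw
    · by_cases hx2 : x ∈ T2
      · obtain ⟨u1, u2, u3, u4⟩ := up T2 h2S h2c hA2 hx2
        refine ⟨T1, T2 ∪ K, fun w hw => (h1S hw).1, u1, h1c, u2, ?_, hA1, 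
          dn T1 hx1 ⟨b1, hb1, hb1B⟩, u3, u4⟩
        rintro w hw1 (hw | hw)
        · exact hd w hw1 hw
        · exact (h1S hw1).2 hw
      · exact ⟨T1, T2, fun w hw => (h1S hw).1, fun w hw => (h2S hw).1, h1c, h2c, hd, hA1,
          dn T1 hx1 ⟨b1, hb1, hb1B⟩, hA2, dn T2 hx2 ⟨b2, hb2, hb2B⟩⟩

/-- The embedding of the child copy `b` of `𝒬_k` into `𝒬_{k+1}`. -/
def qphi (k : ℕ) (b : Bool) : QVert k → QVert (k + 1)
  | Sum.inl false => Sum.inl b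
  | Sum.inl true => Sum.inr ⟨[], Nat.succ_pos k⟩
  | Sum.inr l => Sum.inr ⟨l.1 ++ [b], by have := l.2; simp; omega⟩

theorem qphi_inj (k : ℕ) (b : Bool) : Function.Injective (qphi k b) := by
  rintro ((_ | _) | l) ((_ | _) | l') h
  all_goals simp_all [qphi, Subtype.ext_iff]

theorem qphi_cross (k : ℕ) (p q : QVert k) (h : qphi k false p = qphi k true q) :
    p = Sum.inl true ∧ q = Sum.inl true := by
  rcases p with (_ | _) | l <;> rcases q with (_ | _) | l' <;> simp_all [qphi]

theorem qphi_base (k : ℕ) (b : Bool) (σ : List Bool) (h : σ.length ≤ k) :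
    (qbase (k + 1) (σ ++ [b])).1 = qphi k b (qbase k σ).1 ∧
    (qbase (k + 1) (σ ++ [b])).2 = qphi k b (qbase k σ).2 := by
  induction σ with
  | nil => cases b <;> simp [qbase, qphi]
  | cons c σ ih =>
    have h' : σ.length < k := by simpa using h
    obtain ⟨i1, i2⟩ := ih h'.le
    have h'' : (σ ++ [b]).length < k + 1 := by simpa using h'
    simp only [List.cons_append, qbase]
    refine ⟨?_, ?_⟩
    · cases c <;> simp [i1, i2]
    · rw [dif_pos h'', dif_pos h']; rfl

theorem q_root (k : ℕ) : (Qgraph k).Adj (Sum.inl false) (Sum.inl true) := by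
  simp [Qgraph]

theorem qphi_adj (k : ℕ) (b : Bool) (p q : QVert k) (h : (Qgraph k).Adj p q) :
    (Qgraph (k + 1)).Adj (qphi k b p) (qphi k b q) := by
  unfold Qgraph at h ⊢
  rw [fromEdgeSet_adj] at h ⊢
  obtain ⟨h, hne⟩ := h
  refine ⟨?_, fun h => hne (qphi_inj k b h)⟩
  rw [show s(qphi k b p, qphi k b q) = Sym2.map (qphi k b) s(p, q) from rfl]
  right
  rcases h with h | ⟨σ, hσ, h⟩
  · rw [Set.mem_singleton_iff] at h
    rw [h]
    refine ⟨[], Nat.succ_pos k, ?_⟩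
    cases b
    · left; simp [qphi, qbase]
    · right; simp [qphi, qbase]
  · obtain ⟨i1, i2⟩ := qphi_base k b σ hσ.le
    refine ⟨σ ++ [b], by simpa using hσ, ?_⟩
    rw [i1, i2]
    rcases h with h | h <;> rw [h]
    · left; rfl
    · right; rfl

/-- rooted minor model of `H[S]` in `𝒬_k`. -/
def Emb {V : Type*} (G : SimpleGraph V) (k : ℕ) (S : Set V) (u v : V) : Prop :=
  ∃ f : V → Set (QVert k), (∀ w ∈ S, Cn (Qgraph k) (f w)) ∧
    (∀ w₁ ∈ S, ∀ w₂ ∈ S, ∀ q ∈ f w₁, q ∈ f w₂ → w₁ = w₂) ∧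
    (∀ w₁ ∈ S, ∀ w₂ ∈ S, G.Adj w₁ w₂ → ∃ p ∈ f w₁, ∃ q ∈ f w₂, (Qgraph k).Adj p q) ∧
    Sum.inl false ∈ f u ∧ Sum.inl true ∈ f v

theorem Emb.pair {V : Type*} (G : SimpleGraph V) (k : ℕ) (u v : V) : Emb G k {u, v} u v := by
  refine ⟨fun w => {q | (w = u ∧ q = Sum.inl false) ∨ (w = v ∧ q = Sum.inl true)}, ?_, ?_, ?_,
    by simp, by simp⟩
  · intro w hw
    by_cases h : u = v
    · subst h
      obtain rfl : w = u := by simpa using hw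
      have := (Cn.single (Qgraph k) (Sum.inl false)).adj (Cn.single (Qgraph k) (Sum.inl true)) rfl rfl
        (q_root k)
      convert this using 1
      ext q; simp [or_comm]
    · rcases hw with rfl | rfl
      · convert Cn.single (Qgraph k) (Sum.inl false) using 1
        ext q; simp [h]
      · convert Cn.single (Qgraph k) (Sum.inl true) using 1
        ext q; simp [Ne.symm h]
  · rintro w1 - w2 - q (⟨rfl, rfl⟩ | ⟨rfl, rfl⟩) (⟨rfl, h⟩ | ⟨rfl, h⟩) <;> simp_all
  · rintro w1 (rfl | rfl) w2 (rfl | rfl) h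
    · exact absurd h (G.loopless.irrefl _)
    · exact ⟨Sum.inl false, by simp, Sum.inl true, by simp, q_root k⟩
    · exact ⟨Sum.inl true, by simp, Sum.inl false, by simp, (q_root k).symm⟩
    · exact absurd h (G.loopless.irrefl _)

theorem Emb.glue {V : Type*} {G : SimpleGraph V} {k : ℕ} {S₁ S₂ : Set V} {u v x : V}
    (h₁ : Emb G k S₁ u x) (h₂ : Emb G k S₂ v x) (hu : u ∈ S₁) (hv : v ∈ S₂)
    (hx₁ : x ∈ S₁) (hx₂ : x ∈ S₂)
    (hI : ∀ w ∈ S₁, w ∈ S₂ → w = x ∨ (w = u ∧ w = v))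
    (hE : ∀ a ∈ S₁, ∀ b ∈ S₂, G.Adj a b → a ∈ S₂ ∨ b ∈ S₁ ∨ (a = u ∧ b = v)) :
    Emb G (k + 1) (S₁ ∪ S₂) u v := by
  obtain ⟨f, fc, fd, fa, f0, f1⟩ := h₁
  obtain ⟨g, gc, gd, ga, g0, g1⟩ := h₂
  have memf : ∀ w ∈ S₁, ∀ p ∈ f w, qphi k false p ∈
      {q | (w ∈ S₁ ∧ q ∈ qphi k false '' f w) ∨ (w ∈ S₂ ∧ q ∈ qphi k true '' g w)} :=
    fun w hw p hp => Or.inl ⟨hw, p, hp, rfl⟩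
  have memg : ∀ w ∈ S₂, ∀ p ∈ g w, qphi k true p ∈
      {q | (w ∈ S₁ ∧ q ∈ qphi k false '' f w) ∨ (w ∈ S₂ ∧ q ∈ qphi k true '' g w)} :=
    fun w hw p hp => Or.inr ⟨hw, p, hp, rfl⟩
  have fc' : ∀ w ∈ S₁, Cn (Qgraph (k+1)) (qphi k false '' f w) := fun w hw =>
    (fc w hw).image _ fun a _ b _ h => qphi_adj k false a b h
  have gc' : ∀ w ∈ S₂, Cn (Qgraph (k+1)) (qphi k true '' g w) := fun w hw =>
    (gc w hw).image _ fun a _ b _ h => qphi_adj k true a b h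
  refine ⟨fun w => {q | (w ∈ S₁ ∧ q ∈ qphi k false '' f w) ∨ (w ∈ S₂ ∧ q ∈ qphi k true '' g w)},
    ?_, ?_, ?_, memf u hu _ f0, memg v hv _ g0⟩
  · intro w hw
    by_cases w1 : w ∈ S₁
    · by_cases w2 : w ∈ S₂
      · have : {q | (w ∈ S₁ ∧ q ∈ qphi k false '' f w) ∨ (w ∈ S₂ ∧ q ∈ qphi k true '' g w)} =
          qphi k false '' f w ∪ qphi k true '' g w := by
          ext q; simp [w1, w2]
        simp only [this]
        rcases hI w w1 w2 with rfl | ⟨rfl, rfl⟩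
        · exact (fc' w w1).union (gc' w w2) ⟨_, f1, rfl⟩ ⟨_, g1, rfl⟩
        · exact (fc' w w1).adj (gc' w w2) ⟨_, f0, rfl⟩ ⟨_, g0, rfl⟩ (q_root (k + 1))
      · convert fc' w w1 using 1
        ext q; simp [w1, w2]
    · have w2 : w ∈ S₂ := hw.resolve_left w1
      convert gc' w w2 using 1
      ext q; simp [w1, w2]
  · rintro w1 - w2 - q (⟨i1, p, hp, rfl⟩ | ⟨i1, p, hp, rfl⟩) (⟨i2, p', hp', he⟩ | ⟨i2, p', hp', he⟩)
    · obtain rfl := qphi_inj _ _ he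
      exact fd w1 i1 w2 i2 _ hp hp'
    · obtain ⟨rfl, rfl⟩ := qphi_cross _ _ _ he.symm
      exact (fd w1 i1 x hx₁ _ hp f1).trans (gd x hx₂ w2 i2 _ g1 hp')
    · obtain ⟨rfl, rfl⟩ := qphi_cross _ _ _ he
      exact (gd w1 i1 x hx₂ _ hp g1).trans (fd x hx₁ w2 i2 _ f1 hp')
    · obtain rfl := qphi_inj _ _ he
      exact gd w1 i1 w2 i2 _ hp hp'
  · have cF : ∀ a ∈ S₁, ∀ b ∈ S₁, G.Adj a b → ∃ p ∈ {q | (a ∈ S₁ ∧ q ∈ qphi k false '' f a) ∨ (a ∈ S₂ ∧ q ∈ qphi k true '' g a)},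
        ∃ q ∈ {q | (b ∈ S₁ ∧ q ∈ qphi k false '' f b) ∨ (b ∈ S₂ ∧ q ∈ qphi k true '' g b)},
          (Qgraph (k+1)).Adj p q := by
      intro a ha b hb hab
      obtain ⟨p, hp, q, hq, hpq⟩ := fa a ha b hb hab
      exact ⟨_, memf a ha p hp, _, memf b hb q hq, qphi_adj k false p q hpq⟩
    have cG : ∀ a ∈ S₂, ∀ b ∈ S₂, G.Adj a b → ∃ p ∈ {q | (a ∈ S₁ ∧ q ∈ qphi k false '' f a) ∨ (a ∈ S₂ ∧ q ∈ qphi k true '' g a)},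
        ∃ q ∈ {q | (b ∈ S₁ ∧ q ∈ qphi k false '' f b) ∨ (b ∈ S₂ ∧ q ∈ qphi k true '' g b)},
          (Qgraph (k+1)).Adj p q := by
      intro a ha b hb hab
      obtain ⟨p, hp, q, hq, hpq⟩ := ga a ha b hb hab
      exact ⟨_, memg a ha p hp, _, memg b hb q hq, qphi_adj k true p q hpq⟩
    rintro a (ha | ha) b (hb | hb) hab
    · exact cF a ha b hb hab
    · rcases hE a ha b hb hab with h | h | ⟨rfl, rfl⟩
      · exact cG a h b hb hab
      · exact cF a ha b h hab
      · exact ⟨_, memf a ha _ f0, _, memg b hb _ g0, q_root (k+1)⟩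
    · rcases hE b hb a ha hab.symm with h | h | ⟨rfl, rfl⟩
      · exact cG a ha b h hab
      · exact cF a h b hb hab
      · exact ⟨_, memg a ha _ g0, _, memf b hb _ f0, (q_root (k+1)).symm⟩
    · exact cG a ha b hb hab

theorem Emb.succ {V : Type*} {G : SimpleGraph V} {k : ℕ} {S : Set V} {u v : V}
    (h : Emb G k S u v) (hu : u ∈ S) (hv : v ∈ S) : Emb G (k + 1) S u v := by
  have := h.glue (Emb.pair G k v v) hu (by simp) hv (by simp) (by simp; tauto)
    (by rintro a - b hb -; right; left; simp at hb; exact hb ▸ hv)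
  convert this using 1
  ext w; simp; rintro rfl; exact hv

theorem Emb.mono {V : Type*} {G : SimpleGraph V} {k l : ℕ} {S : Set V} {u v : V}
    (h : Emb G k S u v) (hu : u ∈ S) (hv : v ∈ S) (hl : k ≤ l) : Emb G l S u v := by
  induction hl with
  | refl => exact h
  | step _ ih => exact ih.succ hu hv

/-- Rooted embeddability in some `𝒬_k`. -/
def EE {V : Type*} (G : SimpleGraph V) (S : Set V) (u v : V) : Prop :=
  u ∈ S ∧ v ∈ S ∧ ∃ k, Emb G k S u v

theorem EE.pair {V : Type*} (G : SimpleGraph V) (u v : V) : EE G {u, v} u v :=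
  ⟨by simp, by simp, 0, Emb.pair G 0 u v⟩

theorem EE.glue {V : Type*} {G : SimpleGraph V} {S S₁ S₂ : Set V} {u v x : V}
    (h₁ : EE G S₁ u x) (h₂ : EE G S₂ v x) (hS : S = S₁ ∪ S₂)
    (hI : ∀ w ∈ S₁, w ∈ S₂ → w = x ∨ (w = u ∧ w = v))
    (hE : ∀ a ∈ S₁, ∀ b ∈ S₂, G.Adj a b → a ∈ S₂ ∨ b ∈ S₁ ∨ (a = u ∧ b = v)) :
    EE G S u v := by
  subst hS
  obtain ⟨hu, hx₁, k, h₁⟩ := h₁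
  obtain ⟨hv, hx₂, l, h₂⟩ := h₂
  exact ⟨Or.inl hu, Or.inr hv, _, (h₁.mono hu hx₁ (le_max_left k l)).glue
    (h₂.mono hv hx₂ (le_max_right k l)) hu hv hx₁ hx₂ hI hE⟩

theorem EE.one {V : Type*} {G : SimpleGraph V} {S : Set V} {u v : V}
    (h : EE G S u v) : EE G S u u := by
  obtain ⟨hu, hv, -⟩ := id h
  refine h.glue (EE.pair G u v) ?_ ?_ ?_
  · ext w; simp only [Set.mem_union, Set.mem_insert_iff, Set.mem_singleton_iff]
    refine ⟨Or.inl, ?_⟩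
    rintro (h | rfl | rfl) <;> assumption
  · rintro w - (rfl | rfl) <;> simp
  · rintro a - b (rfl | rfl) - <;> simp [hu, hv]

theorem EE.disj {V : Type*} {G : SimpleGraph V} {S S₁ S₂ : Set V} {u v : V}
    (h₁ : EE G S₁ u u) (h₂ : EE G S₂ v v) (hS : S = S₁ ∪ S₂)
    (hI : ∀ w ∈ S₁, w ∉ S₂) 
    (hE : ∀ a ∈ S₁, ∀ b ∈ S₂, G.Adj a b → (a = u ∧ b = v)) :
    EE G S u v := by
  obtain ⟨hu, -⟩ := id h₁
  obtain ⟨hv, -⟩ := id h₂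
  have s1 : EE G (S₁ ∪ {v, u}) u v := by
    refine h₁.glue (EE.pair G v u) rfl ?_ ?_
    · rintro w hw (rfl | rfl)
      · exact absurd hv (hI _ hw)
      · simp
    · rintro a ha b (rfl | rfl) hab
      · right; right; exact hE a ha b hv hab
      · right; left; exact hu
  refine s1.glue h₂ ?_ ?_ ?_
  · rw [hS]; ext w; simp only [Set.mem_union, Set.mem_insert_iff, Set.mem_singleton_iff]
    constructor
    · tauto
    · rintro ((h | rfl | rfl) | h) <;> simp [*]
  · rintro w (hw | rfl | rfl) hw2
    · exact absurd hw2 (hI _ hw)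
    · simp
    · exact absurd hw2 (hI _ hu)
  · rintro a (ha | rfl | rfl) b hb hab
    · right; right; exact hE a ha b hb hab
    · left; exact hv
    · right; right; exact hE a hu b hb hab

theorem k23_false {V : Type*} {G : SimpleGraph V} (h23 : ¬ IsMinor K23 G) {u v : V} {A : Fin 3 → Set V}
    (huv : u ≠ v) (hc : ∀ i, Cn G (A i)) (hd : ∀ i j, i ≠ j → ∀ w ∈ A i, w ∉ A j)
    (hu : ∀ i, u ∉ A i) (hv : ∀ i, v ∉ A i) (nu : ∀ i, ∃ a ∈ A i, G.Adj u a)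
    (nv : ∀ i, ∃ a ∈ A i, G.Adj v a) : False := by
  apply h23
  have hin : ∀ i : Fin 2, i = 0 ∨ i = 1 := by decide
  have adj : ∀ (i : Fin 2) (j : Fin 3), ∃ x ∈ (if i = 0 then {u} else {v} : Set V), ∃ y ∈ A j,
      G.Adj x y := by
    intro i j
    rcases hin i with rfl | rfl
    · obtain ⟨a, ha, h⟩ := nu j
      exact ⟨u, by simp, a, ha, h⟩
    · obtain ⟨a, ha, h⟩ := nv j
      exact ⟨v, by simp, a, ha, h⟩
  have dj : ∀ (i : Fin 2) (j : Fin 3), Disjoint (if i = 0 then {u} else {v} : Set V) (A j) := by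
    intro i j
    rcases hin i with rfl | rfl
    · simpa using hu j
    · simpa using hv j
  refine ⟨Sum.elim (fun i => if i = 0 then {u} else {v}) A, ?_, ?_, ?_, ?_⟩
  · rintro (i | i)
    · rcases hin i with rfl | rfl <;> simp
    · exact (hc i).ne
  · rintro (i | i)
    · rcases hin i with rfl | rfl
      · exact Cn.single G u
      · exact Cn.single G v
    · exact hc i
  · rintro (i | i) (j | j) hij
    · rcases hin i with rfl | rfl <;> rcases hin j with rfl | rfl <;> simp [huv, huv.symm] at hij ⊢
    · exact dj i j
    · exact (dj j i).symm
    · exact Set.disjoint_left.2 fun w h1 h2 => hd i j (by simpa using hij) w h1 h2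
  · rintro (i | i) (j | j) hij
    · simp [K23] at hij
    · exact adj i j
    · obtain ⟨x, hx, y, hy, h⟩ := adj j i
      exact ⟨y, hy, x, hx, h.symm⟩
    · simp [K23] at hij

theorem k4_false {V : Type*} {G : SimpleGraph V} (h4 : ¬ IsMinor K4 G) {A : Fin 4 → Set V}
    (hc : ∀ i, Cn G (A i)) (hd : ∀ i j, i < j → ∀ w ∈ A i, w ∉ A j)
    (ha : ∀ i j, i < j → ∃ a ∈ A i, ∃ b ∈ A j, G.Adj a b) : False := by
  apply h4
  refine ⟨A, fun i => (hc i).ne, hc, ?_, ?_⟩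
  · intro i j hij
    rcases lt_or_gt_of_ne hij with h | h
    · exact Set.disjoint_left.2 fun w h1 h2 => hd i j h w h1 h2
    · exact Set.disjoint_left.2 fun w h1 h2 => hd j i h w h2 h1
  · intro i j hij
    rcases lt_or_gt_of_ne hij.ne with h | h
    · exact ha i j h
    · obtain ⟨x, hx, y, hy, h⟩ := ha j i h
      exact ⟨y, hy, x, hx, h.symm⟩

/-- `G` without the edge `uv`. -/
def del {V : Type*} (G : SimpleGraph V) (u v : V) : SimpleGraph V := G.deleteEdges {s(u, v)}

theorem del_adj {V : Type*} {G : SimpleGraph V} {u v a b : V} :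
    (del G u v).Adj a b ↔ G.Adj a b ∧ ¬ ((a = u ∧ b = v) ∨ (a = v ∧ b = u)) := by
  simp [del, deleteEdges_adj]

theorem Cn.of_del {V : Type*} {G : SimpleGraph V} {u v : V} {T : Set V} (h : Cn (del G u v) T) :
    Cn G T := h.of_adj fun _ _ _ _ h => (del_adj.1 h).1

/-- outer link -/
def Hyp {V : Type*} (G : SimpleGraph V) (S : Set V) (u v : V) : Prop :=
  ∃ W : Set V, Cn G W ∧ (∀ w ∈ W, w ∉ S) ∧ (∃ w ∈ W, G.Adj u w) ∧ (∃ w ∈ W, G.Adj v w)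

theorem nonsep {V : Type*} [Finite V] {G : SimpleGraph V} {S T₀ : Set V} {u v : V} (huv : u ≠ v)
    (hT₀ : Cn (del G u v) T₀) (h0S : T₀ ⊆ S) (hu : u ∈ T₀) (hv : v ∈ T₀) :
    (∃ x ∈ S, x ≠ u ∧ x ≠ v ∧ ∀ T ⊆ S, x ∉ T → Cn (del G u v) T → u ∈ T → v ∉ T) ∨
    ∃ T₁ T₂ : Set V, T₁ ⊆ S \ {u, v} ∧ T₂ ⊆ S \ {u, v} ∧ Cn G T₁ ∧ Cn G T₂ ∧ (∀ w ∈ T₁, w ∉ T₂) ∧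
      (∃ a ∈ T₁, G.Adj u a) ∧ (∃ a ∈ T₁, G.Adj v a) ∧ (∃ a ∈ T₂, G.Adj u a) ∧
      (∃ a ∈ T₂, G.Adj v a) := by
  by_contra hcon
  push Not at hcon
  obtain ⟨hx, hno⟩ := hcon
  obtain ⟨T₁, T₂, h1, h2, c1, c2, hd, ⟨a, ha, ha'⟩, ⟨b, hb, hb'⟩, ⟨c, hc, hc'⟩, ⟨d, hd1, hd'⟩⟩ :=
    menger2 (del G u v) {a | (del G u v).Adj u a} _ (S \ {u, v}) {a | (del G u v).Adj v a} rfl (by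
    intro x
    have : ∃ T ⊆ S, (x ∉ T ∨ x = u ∨ x = v) ∧ Cn (del G u v) T ∧ u ∈ T ∧ v ∈ T := by
      by_cases h1 : x = u ∨ x = v
      · exact ⟨T₀, h0S, Or.inr h1, hT₀, hu, hv⟩
      · push Not at h1
        by_cases hxS : x ∈ S
        · obtain ⟨T, hTS, hxT, hTc, huT, hvT⟩ := hx x hxS h1.1 h1.2
          exact ⟨T, hTS, Or.inl hxT, hTc, huT, hvT⟩
        · exact ⟨T₀, h0S, Or.inl fun h => hxS (h0S h), hT₀, hu, hv⟩
    obtain ⟨T, hTS, hxT, hTc, huT, hvT⟩ := this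
    obtain ⟨D, hDT, hDv, hDc, huD, d, hdD, z, -, rfl, hdz⟩ := bdry hTc {v} huT huv hvT rfl
    have hdu : d ≠ u := by
      rintro rfl
      exact (del_adj.1 hdz).2 (Or.inl ⟨rfl, rfl⟩)
    obtain ⟨E, hED, hEu, hEc, hdE, e, heE, z', -, rfl, hez⟩ := bdry hDc {u} hdD hdu huD rfl
    refine ⟨E, ?_, ?_, hEc, ⟨e, heE, hez.symm⟩, d, hdE, hdz.symm⟩
    · intro w hw
      refine ⟨hTS (hDT (hED hw)), ?_⟩
      rintro (h | h)
      · exact hEu w hw h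
      · exact hDv w (hED hw) h
    · intro h
      rcases hxT with h' | rfl | rfl
      · exact h' (hDT (hED h))
      · exact hEu _ h rfl
      · exact hDv _ (hED h) rfl) ⟨u⟩
  exact hno T₁ T₂ h1 h2 c1.of_del c2.of_del hd ⟨a, ha, (del_adj.1 ha').1⟩ ⟨b, hb, (del_adj.1 hb').1⟩
    ⟨c, hc, (del_adj.1 hc').1⟩ d hd1 (del_adj.1 hd').1

theorem split {V : Type*} [Finite V] {G : SimpleGraph V} {S T₀ : Set V} {u v x : V}
    (hT₀ : Cn (del G u v) T₀) (h0S : T₀ ⊆ S) (hu : u ∈ T₀) (hv : v ∈ T₀)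
    (hxS : x ∈ S) (hxu : x ≠ u) (hxv : x ≠ v)
    (hx : ∀ T ⊆ S, x ∉ T → Cn (del G u v) T → u ∈ T → v ∉ T)
    (hlink : G.Adj u v ∨ Hyp G S u v)
    (ih : ∀ S' : Set V, S'.ncard < S.ncard → ∀ a ∈ S', ∀ b ∈ S', a ≠ b → Hyp G S' a b → EE G S' a b) :
    EE G S u v := by
  have huS := h0S hu
  have hvS := h0S hv
  obtain ⟨C, hCS, huC, hCc, hCcl⟩ := comp_exists (del G u v) (S \ {x}) (y := u) ⟨huS, hxu.symm⟩
  have hxC : x ∉ C := fun h => (hCS h).2 rfl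
  have hCS' : C ⊆ S := fun w hw => (hCS hw).1
  have hvC : v ∉ C := hx C hCS' hxC hCc huC
  -- links
  have l1 : ∃ W, Cn G W ∧ v ∈ W ∧ (∀ w ∈ W, w ∈ S → w = v) ∧ ∃ w ∈ W, G.Adj u w := by
    rcases hlink with h | ⟨W, hW, hWS, h1, b, hb, hvb⟩
    · exact ⟨{v}, Cn.single _ _, rfl, fun w hw _ => hw, v, rfl, h⟩
    · obtain ⟨a, ha, hua⟩ := h1
      refine ⟨W ∪ {v}, hW.adj (Cn.single _ v) hb rfl hvb.symm, Or.inr rfl, ?_, a, Or.inl ha, hua⟩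
      rintro w (hw | rfl) hS
      · exact absurd hS (hWS w hw)
      · rfl
  have l2 : ∃ W, Cn G W ∧ u ∈ W ∧ (∀ w ∈ W, w ∈ S → w = u) ∧ ∃ w ∈ W, G.Adj v w := by
    rcases hlink with h | ⟨W, hW, hWS, ⟨b, hb, hvb⟩, h1⟩
    · exact ⟨{u}, Cn.single _ _, rfl, fun w hw _ => hw, u, rfl, h.symm⟩
    · obtain ⟨a, ha, hua⟩ := h1
      refine ⟨W ∪ {u}, hW.adj (Cn.single _ u) hb rfl hvb.symm, Or.inr rfl, ?_, a, Or.inl ha, hua⟩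
      rintro w (hw | rfl) hS
      · exact absurd hS (hWS w hw)
      · rfl
  have e1 : EE G (C ∪ {x}) u x := by
    refine ih _ ?_ u (Or.inl huC) x (Or.inr rfl) hxu.symm ?_
    · refine Set.ncard_lt_ncard ⟨Set.union_subset hCS' (by simpa), fun h => ?_⟩ (Set.toFinite S)
      rcases h hvS with h | h
      · exact hvC h
      · exact hxv h.symm
    · obtain ⟨D, hDT, hDX, hDc, hvD, d, hdD, z, hzT, hzX, hdz⟩ := bdry hT₀ (C ∪ {x}) hv
        (by rintro (h | h); exacts [hvC h, hxv h.symm]) hu (Or.inl huC)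
      have hzx : z = x := by
        rcases hzX with h | h
        · exact absurd (Or.inl (hCcl z h d ⟨h0S (hDT hdD), fun h' => hDX d hdD (Or.inr h')⟩ hdz.symm))
            (hDX d hdD)
        · exact h
      subst hzx
      obtain ⟨W, hW, hvW, hWS, w, hw, huw⟩ := l1
      refine ⟨W ∪ D, hW.union hDc.of_del hvW hvD, ?_, ⟨w, Or.inl hw, huw⟩, d, Or.inr hdD,
        (del_adj.1 hdz).1.symm⟩
      rintro y (hy | hy)
      · rintro (h | h)
        · exact hvC (hWS y hy (hCS' h) ▸ h)
        · obtain rfl : y = z := h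
          exact hxv (hWS y hy hxS)
      · exact hDX y hy
  have e2 : EE G (S \ C) v x := by
    refine ih (S \ C) ?_ v ⟨hvS, hvC⟩ x ⟨hxS, hxC⟩ hxv.symm ?_
    · exact Set.ncard_lt_ncard ⟨Set.sdiff_subset, fun h => (h huS).2 huC⟩ (Set.toFinite S)
    · obtain ⟨D, hDT, hDX, hDc, huD, d, hdD, z, hzT, hzX, hdz⟩ := bdry hT₀ (S \ C) hu
        (fun h => h.2 huC) hv ⟨hvS, hvC⟩
      have hdC : d ∈ C := by
        by_contra h
        exact hDX d hdD ⟨h0S (hDT hdD), h⟩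
      have hzx : z = x := by
        by_contra h
        exact hzX.2 (hCcl d hdC z ⟨hzX.1, h⟩ hdz)
      subst hzx
      obtain ⟨W, hW, huW, hWS, w, hw, hvw⟩ := l2
      refine ⟨W ∪ C, hW.union hCc.of_del huW huC, ?_, ⟨w, Or.inl hw, hvw⟩, d, Or.inr hdC,
        (del_adj.1 hdz).1.symm⟩
      rintro y (hy | hy) h
      · exact h.2 (hWS y hy h.1 ▸ huC)
      · exact h.2 hy
  refine e1.glue e2 ?_ ?_ ?_
  · ext w
    constructor
    · intro h
      by_cases hc : w ∈ C
      · exact Or.inl (Or.inl hc)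
      · exact Or.inr ⟨h, hc⟩
    · rintro ((h | rfl) | h)
      exacts [hCS' h, hxS, h.1]
  · rintro w (h | h) h'
    · exact absurd h h'.2
    · exact Or.inl h
  · rintro a (ha | rfl) b hb hab
    · by_cases hbx : b = x
      · right; left; right; exact hbx
      · right; right
        by_contra hne
        refine hb.2 (hCcl a ha b ⟨hb.1, hbx⟩ (del_adj.2 ⟨hab, ?_⟩))
        rintro (h | ⟨rfl, rfl⟩)
        · exact hne h
        · exact hvC ha
    · left; exact ⟨hxS, hxC⟩

theorem main_ind {V : Type*} [Finite V] {G : SimpleGraph V} (h4 : ¬ IsMinor K4 G)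
    (h23 : ¬ IsMinor K23 G) : ∀ (n : ℕ) (S : Set V), S.ncard = n →
    (∀ u ∈ S, EE G S u u) ∧ (∀ u ∈ S, ∀ v ∈ S, u ≠ v → Hyp G S u v → EE G S u v) := by
  intro n
  induction n using Nat.strong_induction_on with
  | _ n ih =>
  intro S hn
  have ihA : ∀ S' : Set V, S'.ncard < S.ncard → ∀ a ∈ S', EE G S' a a :=
    fun S' h => (ih _ (hn ▸ h) S' rfl).1
  have ihB : ∀ S' : Set V, S'.ncard < S.ncard → ∀ a ∈ S', ∀ b ∈ S', a ≠ b → Hyp G S' a b →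
      EE G S' a b := fun S' h => (ih _ (hn ▸ h) S' rfl).2
  have card : ∀ S' : Set V, S' ⊆ S → (∃ x ∈ S, x ∉ S') → S'.ncard < S.ncard := by
    rintro S' h ⟨x, hx, hx'⟩
    exact Set.ncard_lt_ncard ⟨h, fun h' => hx' (h' hx)⟩ (Set.toFinite S)
  constructor
  · intro u hu
    by_cases hemp : ∃ c ∈ S, c ≠ u
    swap
    · push Not at hemp
      have : S = {u, u} := by ext w; simp; exact ⟨hemp w, fun h => h ▸ hu⟩
      rw [this]
      exact EE.pair G u u
    obtain ⟨c, hcS, hcu⟩ := hemp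
    obtain ⟨C, hCS, hcC, hCc, hCcl⟩ := comp_exists G (S \ {u}) (y := c) ⟨hcS, hcu⟩
    have huC : u ∉ C := fun h => (hCS h).2 rfl
    have hCS' : C ⊆ S := fun w hw => (hCS hw).1
    by_cases hfull : ∃ e ∈ S, e ≠ u ∧ e ∉ C
    · obtain ⟨e, heS, heu, heC⟩ := hfull
      have e1 : EE G (C ∪ {u}) u u := ihA _ (card _ (Set.union_subset hCS' (by simpa))
        ⟨e, heS, by rintro (h | h); exacts [heC h, heu h]⟩) u (Or.inr rfl)
      have e2 : EE G (S \ C) u u := ihA _ (card _ Set.sdiff_subset ⟨c, hcS, fun h => h.2 hcC⟩) u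
        ⟨hu, huC⟩
      refine e1.glue e2 ?_ ?_ ?_
      · ext w
        constructor
        · intro h
          by_cases hc : w ∈ C
          · exact Or.inl (Or.inl hc)
          · exact Or.inr ⟨h, hc⟩
        · rintro ((h | rfl) | h)
          exacts [hCS' h, hu, h.1]
      · rintro w (h | h) h'
        · exact absurd h h'.2
        · exact Or.inl h
      · rintro a (ha | rfl) b hb hab
        · by_cases hbx : b = u
          · right; left; right; exact hbx
          · exact absurd (hCcl a ha b ⟨hb.1, hbx⟩ hab) hb.2
        · left; exact ⟨hu, huC⟩
    push Not at hfull
    by_cases hone : ∃ v ∈ C, ∀ w ∈ C, G.Adj u w → w = v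
    · obtain ⟨v, hvC, hv⟩ := hone
      have e2 : EE G C v v := ihA _ (card _ hCS' ⟨u, hu, huC⟩) v hvC
      have : EE G S u v := by
        refine (EE.pair G u v).glue e2 ?_ ?_ ?_
        · ext w
          constructor
          · intro h
            by_cases hwu : w = u
            · exact Or.inl (Or.inl hwu)
            · exact Or.inr (hfull w h hwu)
          · rintro ((rfl | rfl) | h)
            exacts [hu, hCS' hvC, hCS' h]
        · rintro w (rfl | rfl) h'
          · exact absurd h' huC
          · exact Or.inl rfl
        · rintro a (rfl | rfl) b hb hab
          · right; left; right; exact hv b hb hab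
          · left; exact hvC
      exact this.one
    push Not at hone
    -- extremal choice
    obtain ⟨w0, hw0C, hw0, -⟩ := hone c hcC
    obtain ⟨w1, hw1C, hw1, hw10⟩ := hone w0 hw0C
    obtain ⟨⟨v, K⟩, ⟨hvC, huv, hKC, hKc, k0, hk0K, hk0⟩, hmax⟩ :=
      Set.exists_max_image {p : V × Set V | p.1 ∈ C ∧ G.Adj u p.1 ∧ p.2 ⊆ C \ {p.1} ∧ Cn G p.2 ∧
        ∃ w ∈ p.2, G.Adj u w} (fun p => p.2.ncard) (Set.toFinite _)
        ⟨(w0, {w1}), hw0C, hw0, by rintro w rfl; exact ⟨hw1C, hw10⟩, Cn.single _ _, w1, rfl, hw1⟩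
    simp only at hvC huv hKC hKc hk0K
    have hk0v : k0 ≠ v := fun h => (hKC hk0K).2 h
    have hvS := hCS' hvC
    have hK : ∀ w ∈ C, G.Adj u w → w ≠ v → w ∈ K := by
      intro w hwC huw hwv
      by_contra hwK
      obtain ⟨D, hDC, hDv, hDc, hkD, d, hdD, z, -, rfl, hdz⟩ :=
        bdry hCc {v} (hKC hk0K).1 hk0v hvC rfl
      have hKD := hmax (z, K ∪ D) ⟨hvC, huv, Set.union_subset hKC fun y hy => ⟨hDC hy, hDv y hy⟩,
        hKc.union hDc hk0K hkD, k0, Or.inl hk0K, hk0⟩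
      have hKD' : K = K ∪ D := Set.eq_of_subset_of_ncard_le Set.subset_union_left hKD (Set.toFinite _)
      have hdK : d ∈ K := by rw [hKD']; exact Or.inr hdD
      have := hmax (w, K ∪ {z}) ⟨hwC, huw, ?_, hKc.adj (Cn.single _ z) hdK rfl hdz, k0, Or.inl hk0K, hk0⟩
      · simp only at this
        have h2 : K.ncard < (K ∪ {z}).ncard := Set.ncard_lt_ncard
          ⟨Set.subset_union_left, fun h => (hKC (h (Or.inr rfl))).2 rfl⟩ (Set.toFinite _)
        omega
      · rintro y (hy | rfl)
        · exact ⟨(hKC hy).1, by rintro rfl; exact hwK hy⟩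
        · exact ⟨hvC, hwv.symm⟩
    have hT0 : Cn (del G u v) (C ∪ {u}) := by
      have c1 : Cn (del G u v) C := hCc.of_adj fun a ha b hb hab => del_adj.2 ⟨hab, by
        rintro (⟨rfl, rfl⟩ | ⟨rfl, rfl⟩)
        · exact huC ha
        · exact huC hb⟩
      refine c1.adj (Cn.single _ u) (hKC hk0K).1 rfl (del_adj.2 ⟨hk0.symm, ?_⟩)
      rintro (⟨rfl, -⟩ | ⟨h, -⟩)
      · exact huC (hKC hk0K).1
      · exact hk0v h
    have h0S : C ∪ {u} ⊆ S := Set.union_subset hCS' (by simpa)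
    suffices EE G S u v from this.one
    rcases nonsep huv.ne hT0 h0S (Or.inr rfl) (Or.inl hvC) with ⟨x, hxS, hxu, hxv, hx⟩ |
      ⟨T₁, T₂, s1, s2, c1, c2, hd, ⟨a1, ha1, ua1⟩, ⟨b1, hb1, vb1⟩, ⟨a2, ha2, ua2⟩, ⟨b2, hb2, vb2⟩⟩
    · exact split hT0 h0S (Or.inr rfl) (Or.inl hvC) hxS hxu hxv hx (Or.inl huv) ihB
    · exfalso
      have inK : ∀ T : Set V, T ⊆ S \ {u, v} → ∀ a ∈ T, G.Adj u a → a ∈ K := by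
        intro T hT a ha hua
        have := (hT ha).2
        simp at this
        exact hK a (hfull a (hT ha).1 this.1) hua this.2
      have k1 := inK T₁ s1 a1 ha1 ua1
      have k2 := inK T₂ s2 a2 ha2 ua2
      have hcU : Cn G (K ∪ T₁ ∪ T₂) := (hKc.union c1 k1 ha1).union c2 (Or.inl k2) ha2
      obtain ⟨D, hDT, hDX, hDc, haD, d, hdD, z, hzT, hzX, hdz⟩ := bdry (a := a1) (b := a2) hcU T₂
        (Or.inl (Or.inl k1)) (hd a1 ha1) (Or.inl (Or.inl k2)) ha2
      have nT : ∀ T : Set V, T ⊆ S \ {u, v} → u ∉ T ∧ v ∉ T := fun T hT =>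
        ⟨fun h => (hT h).2 (Or.inl rfl), fun h => (hT h).2 (Or.inr rfl)⟩
      have uK : u ∉ K := fun h => huC (hKC h).1
      have vK : v ∉ K := fun h => (hKC h).2 rfl
      have uD : u ∉ T₁ ∪ D := by
        rintro (h | h)
        · exact (nT _ s1).1 h
        · rcases hDT h with (h | h) | h
          exacts [uK h, (nT _ s1).1 h, (nT _ s2).1 h]
      have vD : v ∉ T₁ ∪ D := by
        rintro (h | h)
        · exact (nT _ s1).2 h
        · rcases hDT h with (h | h) | h
          exacts [vK h, (nT _ s1).2 h, (nT _ s2).2 h]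
      have cD : Cn G (T₁ ∪ D) := c1.union hDc ha1 haD
      refine k4_false h4 (A := ![{u}, {v}, T₁ ∪ D, T₂]) ?_ ?_ ?_
      · intro i
        fin_cases i
        exacts [Cn.single _ _, Cn.single _ _, cD, c2]
      · have q1 : ∀ w ∈ ({u} : Set V), w ∉ ({v} : Set V) := by
          rintro w rfl; exact huv.ne
        have q2 : ∀ w ∈ ({u} : Set V), w ∉ T₁ ∪ D := by rintro w rfl; exact uD
        have q3 : ∀ w ∈ ({u} : Set V), w ∉ T₂ := by rintro w rfl; exact (nT _ s2).1
        have q4 : ∀ w ∈ ({v} : Set V), w ∉ T₁ ∪ D := by rintro w rfl; exact vD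
        have q5 : ∀ w ∈ ({v} : Set V), w ∉ T₂ := by rintro w rfl; exact (nT _ s2).2
        have q6 : ∀ w ∈ T₁ ∪ D, w ∉ T₂ := by
          rintro w (h | h)
          exacts [hd w h, hDX w h]
        intro i j hij
        fin_cases i <;> fin_cases j <;> first | exact absurd hij (by decide) | assumption
      · have q1 : ∃ a ∈ ({u} : Set V), ∃ b ∈ ({v} : Set V), G.Adj a b := ⟨u, rfl, v, rfl, huv⟩
        have q2 : ∃ a ∈ ({u} : Set V), ∃ b ∈ T₁ ∪ D, G.Adj a b := ⟨u, rfl, a1, Or.inl ha1, ua1⟩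
        have q3 : ∃ a ∈ ({u} : Set V), ∃ b ∈ T₂, G.Adj a b := ⟨u, rfl, a2, ha2, ua2⟩
        have q4 : ∃ a ∈ ({v} : Set V), ∃ b ∈ T₁ ∪ D, G.Adj a b := ⟨v, rfl, b1, Or.inl hb1, vb1⟩
        have q5 : ∃ a ∈ ({v} : Set V), ∃ b ∈ T₂, G.Adj a b := ⟨v, rfl, b2, hb2, vb2⟩
        have q6 : ∃ a ∈ T₁ ∪ D, ∃ b ∈ T₂, G.Adj a b := ⟨d, Or.inr hdD, z, hzX, hdz⟩
        intro i j hij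
        fin_cases i <;> fin_cases j <;> first | exact absurd hij (by decide) | assumption
  · intro u hu v hv huv hyp
    obtain ⟨C, hCS, huC, hCc, hCcl⟩ := comp_exists (del G u v) S hu
    by_cases hvC : v ∈ C
    swap
    · have e1 : EE G C u u := ihA _ (card _ hCS ⟨v, hv, hvC⟩) u huC
      have e2 : EE G (S \ C) v v := ihA _ (card _ Set.sdiff_subset ⟨u, hu, fun h => h.2 huC⟩) v
        ⟨hv, hvC⟩
      refine e1.disj e2 (by rw [Set.union_sdiff_cancel hCS]) (fun w h h' => h'.2 h) ?_
      intro a ha b hb hab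
      by_contra hne
      refine hb.2 (hCcl a ha b hb.1 (del_adj.2 ⟨hab, ?_⟩))
      rintro (h | ⟨rfl, rfl⟩)
      · exact hne h
      · exact hvC ha
    rcases nonsep huv hCc hCS huC hvC with ⟨x, hxS, hxu, hxv, hx⟩ |
      ⟨T₁, T₂, s1, s2, c1, c2, hd, a1, b1, a2, b2⟩
    · exact split hCc hCS huC hvC hxS hxu hxv hx (Or.inr hyp) ihB
    · exfalso
      obtain ⟨W, hW, hWS, a3, b3⟩ := hyp
      have nT : ∀ T : Set V, T ⊆ S \ {u, v} → u ∉ T ∧ v ∉ T := fun T hT =>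
        ⟨fun h => (hT h).2 (Or.inl rfl), fun h => (hT h).2 (Or.inr rfl)⟩
      refine k23_false h23 (A := ![T₁, T₂, W]) huv ?_ ?_ ?_ ?_ ?_ ?_
      · intro i
        fin_cases i <;> assumption
      · have q1 : ∀ w ∈ T₂, w ∉ T₁ := fun w h h' => hd w h' h
        have q2 : ∀ w ∈ T₁, w ∉ W := fun w h h' => hWS w h' (s1 h).1
        have q3 : ∀ w ∈ T₂, w ∉ W := fun w h h' => hWS w h' (s2 h).1
        have q4 : ∀ w ∈ W, w ∉ T₁ := fun w h h' => hWS w h (s1 h').1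
        have q5 : ∀ w ∈ W, w ∉ T₂ := fun w h h' => hWS w h (s2 h').1
        intro i j hij
        fin_cases i <;> fin_cases j <;> first | exact absurd rfl hij | assumption
      · intro i
        fin_cases i
        exacts [(nT _ s1).1, (nT _ s2).1, fun h => hWS _ h hu]
      · intro i
        fin_cases i
        exacts [(nT _ s1).2, (nT _ s2).2, fun h => hWS _ h hv]
      · intro i
        fin_cases i <;> assumption
      · intro i
        fin_cases i <;> assumption

/-- Lemma 2.4. If a graph `H` has no `K₄` or `K_{2,3}` minor, then `H` is
isomorphic to a minor of `𝒬_k` for some `k`. -/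
theorem minor_of_Qk_of_no_K4_K23_minor {V : Type} [Fintype V] (H : SimpleGraph V)
    (h4 : ¬ IsMinor K4 H) (h23 : ¬ IsMinor K23 H) :
    ∃ k : ℕ, 0 < k ∧ IsMinor H (Qgraph k) := by
  rcases isEmpty_or_nonempty V with hV | ⟨⟨u⟩⟩
  · exact ⟨1, one_pos, fun _ => ∅, fun w => hV.elim w, fun w => hV.elim w, fun w => hV.elim w,
      fun w => hV.elim w⟩
  · obtain ⟨hu, -, k, h⟩ := (main_ind h4 h23 _ Set.univ rfl).1 u trivial
    obtain ⟨f, fc, fd, fa, -, -⟩ := h.succ hu hu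
    exact ⟨k + 1, Nat.succ_pos k, f, fun w => (fc w trivial).ne, fun w => fc w trivial,
      fun a b hab => Set.disjoint_left.2 fun q h1 h2 => hab (fd a trivial b trivial q h1 h2),
      fun a b hab => fa a trivial b trivial hab⟩
end
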